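/- Let d ≥ 1, D := {1,...,d} and let B ⊆ D be nonempty. If f : I^d → ℝ is measurable with ∫_{I^d} |f| log^{|B|-1}(1+|f|) < ∞, then (L_{n_B}∘R_{n_{B'}})(f) → f in Lebesgue measure on I^d as min_{j∈D} n_j → ∞; that is, for every ε > 0, mes{x ∈ I^d : |(L_{n_B}∘R_{n_{B'}})(f;x) − f(x)| > ε} → 0. -/

import Mathlib

open MeasureTheory Filter

noncomputable section

/-- The unit cube `[0,1)^d`. -/
def unitCube (d : ℕ) : Set (Fin d → ℝ) := Set.univ.pi fun _ => Set.Ico (0:ℝ) 1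

/-- Lebesgue measure restricted to the unit cube `[0,1)^d`. -/
def cubeMeasure (d : ℕ) : Measure (Fin d → ℝ) := volume.restrict (unitCube d)

/-- The `1`-periodic function equal to `1` on `[0,1/2)` and to `-1` on `[1/2,1)`. -/
def r0 (x : ℝ) : ℝ := if Int.fract x < 1/2 then 1 else -1

/-- The Rademacher functions. -/
def rademacher (n : ℕ) (x : ℝ) : ℝ := r0 (2 ^ n * x)

/-- The Walsh functions (in Paley enumeration, via binary digits). -/
def walsh (n : ℕ) (x : ℝ) : ℝ :=
  ∏ k ∈ Finset.range (n + 1), if n.testBit k then rademacher k x else 1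

/-- The Walsh–Dirichlet kernel `D_n`. -/
def dirichletKernel (n : ℕ) (x : ℝ) : ℝ := ∑ k ∈ Finset.range n, walsh k x

/-- `l_n = ∑_{k=1}^{n-1} 1/k`. -/
def logSum (n : ℕ) : ℝ := ∑ k ∈ Finset.Icc 1 (n - 1), (1 : ℝ) / k

/-- The Nörlund logarithmic kernel `F_n`. -/
def FKernel (n : ℕ) (u : ℝ) : ℝ :=
  (1 / logSum n) * ∑ i ∈ Finset.Ico 1 n, dirichletKernel (n - i) u / i

/-- The Riesz logarithmic kernel `G_n`. -/
def GKernel (n : ℕ) (u : ℝ) : ℝ :=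
  (1 / logSum n) * ∑ i ∈ Finset.Ico 1 n, dirichletKernel i u / i

/-- Walsh–Fourier coefficient of `f` on the unit cube. -/
def walshCoef {d : ℕ} (f : (Fin d → ℝ) → ℝ) (j : Fin d → ℕ) : ℝ :=
  ∫ x, f x * ∏ i, walsh (j i) (x i) ∂(cubeMeasure d)

/-- Rectangular partial sums of the multiple Walsh–Fourier series. -/
def rectPartialSum {d : ℕ} (f : (Fin d → ℝ) → ℝ) (N : Fin d → ℕ) (x : Fin d → ℝ) : ℝ :=
  ∑ j ∈ Fintype.piFinset (fun i => Finset.range (N i)),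
    walshCoef f j * ∏ i, walsh (j i) (x i)

/-- The mixed logarithmic means `(L_{n_B} ∘ R_{n_{B'}})(f)`. -/
def mixedLogMean {d : ℕ} (B : Finset (Fin d)) (f : (Fin d → ℝ) → ℝ)
    (n : Fin d → ℕ) (x : Fin d → ℝ) : ℝ :=
  (∏ j, logSum (n j))⁻¹ *
    ∑ i ∈ Fintype.piFinset (fun j => Finset.Ico 1 (n j)),
      rectPartialSum f (fun j => if j ∈ B then n j - i j else i j) x / ∏ j, (i j : ℝ)

/-- A Young function: convex, continuous, even, vanishing at `0`, with
`Q(u)/u → ∞` at `+∞` and `Q(u)/u → 0` at `0`. -/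
structure YoungFunction where
  toFun : ℝ → ℝ
  nonneg : ∀ u, 0 ≤ toFun u
  convexOn : ConvexOn ℝ Set.univ toFun
  continuous : Continuous toFun
  even : ∀ u, toFun (-u) = toFun u
  map_zero : toFun 0 = 0
  tendsto_atTop : Tendsto (fun u => toFun u / u) atTop atTop
  tendsto_zero : Tendsto (fun u => toFun u / u) (nhdsWithin 0 {(0:ℝ)}ᶜ) (nhds 0)

/-- The set of admissible constants `k` in the Luxemburg norm of `f`. -/
def orliczSet {d : ℕ} (Q : YoungFunction) (f : (Fin d → ℝ) → ℝ) : Set ℝ :=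
  {k | 0 < k ∧ Integrable (fun x => Q.toFun (|f x| / k)) (cubeMeasure d) ∧
    ∫ x, Q.toFun (|f x| / k) ∂(cubeMeasure d) ≤ 1}

/-- `f` belongs to the Orlicz space `L_Q(I^d)`. -/
def MemOrlicz {d : ℕ} (Q : YoungFunction) (f : (Fin d → ℝ) → ℝ) : Prop :=
  Measurable f ∧ (orliczSet Q f).Nonempty

/-- The Luxemburg norm on the Orlicz space `L_Q(I^d)`. -/
def orliczNorm {d : ℕ} (Q : YoungFunction) (f : (Fin d → ℝ) → ℝ) : ℝ :=
  sInf (orliczSet Q f)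

/-- `p_n = 2^{2n} + 2^{2n-2} + ⋯ + 2^0`. -/
def pIdx (n : ℕ) : ℕ := ∑ k ∈ Finset.range (n + 1), 4 ^ k

/-- `m̃ = ⌊ l_{p_{⌊m/2⌋}-1}/16 - 2^15 ⌋`. -/
def mTilde (m : ℕ) : ℤ := ⌊logSum (pIdx (m / 2) - 1) / 16 - 2 ^ 15⌋

/-- `m₀ = min{m : m̃ > 1}`. -/
def m₀ : ℕ := sInf {m : ℕ | 1 < mTilde m}

/-- The set `Ω_n`. -/
def Omega (n : ℕ) : Set ℝ :=
  ⋃ m ∈ Finset.Icc n (2 * n),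
    Set.Ico ((2:ℝ) ^ (-(m:ℤ) - 1) + (2:ℝ) ^ (-(m:ℤ) - mTilde m)) ((2:ℝ) ^ (-(m:ℤ)))

/-- `k`-th binary digit of `x` (the expansion not terminating in `1`'s). -/
def binDigit (k : ℕ) (x : ℝ) : ℕ := (⌊x * 2 ^ (k + 1)⌋).toNat % 2

/-- Dyadic addition on `[0,1)`. -/
def dyadicAdd (x t : ℝ) : ℝ :=
  ∑' k : ℕ, |(binDigit k x : ℝ) - (binDigit k t : ℝ)| / 2 ^ (k + 1)

/-- Dyadic convolution `f ∗ K` on `[0,1)`. -/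
def dyadicConv (f K : ℝ → ℝ) (x : ℝ) : ℝ :=
  ∫ t in Set.Ico (0:ℝ) 1, f t * K (dyadicAdd x t)

/-- Lebesgue measure restricted to `[0,1)`. -/
def unitMeasure : Measure ℝ := volume.restrict (Set.Ico (0:ℝ) 1)

/-- A set `A ⊆ L_Q(I^d)` is nowhere dense w.r.t. the Luxemburg norm. -/
def OrliczNowhereDense {d : ℕ} (Q : YoungFunction) (A : Set ((Fin d → ℝ) → ℝ)) : Prop :=
  ∀ f, MemOrlicz Q f → ∀ ε > 0, ∃ g, MemOrlicz Q g ∧ ∃ δ > 0,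
    (∀ h, MemOrlicz Q h → orliczNorm Q (h - g) < δ → orliczNorm Q (h - f) < ε) ∧
    (∀ h, MemOrlicz Q h → orliczNorm Q (h - g) < δ → h ∉ A)

/-- A set `A ⊆ L_Q(I^d)` is of first Baire category (meager) w.r.t. the Luxemburg norm. -/
def OrliczMeager {d : ℕ} (Q : YoungFunction) (A : Set ((Fin d → ℝ) → ℝ)) : Prop :=
  ∃ F : ℕ → Set ((Fin d → ℝ) → ℝ), (∀ k, OrliczNowhereDense Q (F k)) ∧ A ⊆ ⋃ k, F k

/-- Abstract Walsh product. -/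
def Wp (ρ : ℕ → ℝ) (j : ℕ) : ℝ :=
  ∏ k ∈ Finset.range (j + 1), if j.testBit k then ρ k else 1

def Dk (ρ : ℕ → ℝ) (n : ℕ) : ℝ := ∑ j ∈ Finset.range n, Wp ρ j

def Hs (n : ℕ) : ℝ := ∑ i ∈ Finset.range n, (1 : ℝ) / (i + 1)

lemma Wp_eq (ρ : ℕ → ℝ) (j N : ℕ) (h : j < 2 ^ N) :
    Wp ρ j = ∏ k ∈ Finset.range N, if j.testBit k then ρ k else 1 := by
  unfold Wp
  have key : ∀ a b : ℕ, a ≤ b → j < 2 ^ a →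
      (∏ k ∈ Finset.range a, if j.testBit k then ρ k else 1) =
      ∏ k ∈ Finset.range b, if j.testBit k then ρ k else 1 := by
    intro a b hab hj
    apply Finset.prod_subset
    · intro k hk; simp at *; omega
    · intro k _ hk
      have : a ≤ k := by simpa using hk
      have h2 : j.testBit k = false := Nat.testBit_lt_two_pow (lt_of_lt_of_le hj (Nat.pow_le_pow_right (by norm_num) this))
      simp [h2]
  have hj : j < 2 ^ (j+1) := lt_trans (Nat.lt_two_pow_self) (Nat.pow_lt_pow_right (by norm_num) (by omega))
  rcases le_total (j+1) N with h1 | h1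
  · exact key _ _ h1 hj
  · exact (key _ _ h1 h).symm

lemma Wp_mul (ρ σ : ℕ → ℝ) (j : ℕ) : Wp (fun k => ρ k * σ k) j = Wp ρ j * Wp σ j := by
  unfold Wp
  rw [← Finset.prod_mul_distrib]
  apply Finset.prod_congr rfl
  intro k _; split_ifs <;> simp

def IsSgn (ρ : ℕ → ℝ) : Prop := ∀ k, ρ k * ρ k = 1

lemma Wp_sq {ρ : ℕ → ℝ} (h : IsSgn ρ) (j : ℕ) : Wp ρ j * Wp ρ j = 1 := by
  rw [← Wp_mul]; unfold Wp
  apply Finset.prod_eq_one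
  intro k _; split_ifs <;> simp [h k]

lemma Wp_abs {ρ : ℕ → ℝ} (h : IsSgn ρ) (j : ℕ) : |Wp ρ j| = 1 := by
  have := Wp_sq h j
  have h2 : |Wp ρ j| * |Wp ρ j| = 1 := by rw [← abs_mul, this, abs_one]
  nlinarith [abs_nonneg (Wp ρ j)]

lemma IsSgn.abs {ρ : ℕ → ℝ} (h : IsSgn ρ) (j : ℕ) : |ρ j| = 1 := by
  have := h j
  have h2 : |ρ j| * |ρ j| = 1 := by rw [← abs_mul, this, abs_one]
  nlinarith [abs_nonneg (ρ j)]

lemma IsSgn.mul {ρ σ : ℕ → ℝ} (h : IsSgn ρ) (h' : IsSgn σ) : IsSgn (ρ * σ) := by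
  intro k
  have := h k; have := h' k
  simp only [Pi.mul_apply]
  calc _ = (ρ k * ρ k) * (σ k * σ k) := by ring
    _ = 1 := by simp [*]

lemma Wp_add (ρ : ℕ → ℝ) (a r : ℕ) (hr : r < 2 ^ a) : Wp ρ (2 ^ a + r) = ρ a * Wp ρ r := by
  rw [Wp_eq ρ (2^a+r) (a+1) (by rw [pow_succ]; omega), Wp_eq ρ r a hr, Finset.prod_range_succ, mul_comm]
  congr 1
  · have : (2 ^ a + r).testBit a = true := by
      rw [Nat.testBit_two_pow_add_eq]; simp [Nat.testBit_lt_two_pow hr]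
    simp [this]
  · apply Finset.prod_congr rfl
    intro k hk
    rw [Nat.testBit_two_pow_add_gt (by simpa using hk)]

lemma Wp_compl {ρ : ℕ → ℝ} (h : IsSgn ρ) (a i : ℕ) (hi : i < 2 ^ a) :
    Wp ρ (2 ^ a - (i + 1)) = Wp ρ (2 ^ a - 1) * Wp ρ i := by
  have h0 : 0 < 2 ^ a := by positivity
  rw [Wp_eq ρ _ a (by omega), Wp_eq ρ (2^a-1) a (by omega), Wp_eq ρ i a hi, ← Finset.prod_mul_distrib]
  apply Finset.prod_congr rfl
  intro k hk
  have hk' : k < a := by simpa using hk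
  rw [Nat.testBit_two_pow_sub_succ hi, Nat.testBit_two_pow_sub_one]
  have := h k
  by_cases hb : i.testBit k <;> simp [hb, hk', this]

lemma Dk_add (ρ : ℕ → ℝ) (a r : ℕ) (hr : r ≤ 2 ^ a) :
    Dk ρ (2 ^ a + r) = Dk ρ (2 ^ a) + ρ a * Dk ρ r := by
  unfold Dk
  rw [Finset.sum_range_add, Finset.mul_sum]
  congr 1
  apply Finset.sum_congr rfl
  intro i hi
  exact Wp_add ρ a i (lt_of_lt_of_le (by simpa using hi) hr)

lemma Dk_pow (ρ : ℕ → ℝ) (a : ℕ) : Dk ρ (2 ^ a) = ∏ k ∈ Finset.range a, (1 + ρ k) := by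
  induction a with
  | zero => simp [Dk, Wp]
  | succ a ih =>
    rw [Finset.prod_range_succ, ← ih, pow_succ, mul_two, Dk_add ρ a _ le_rfl]; ring

lemma Dk_compl {ρ : ℕ → ℝ} (h : IsSgn ρ) (a j : ℕ) (hj : j ≤ 2 ^ a) :
    Dk ρ (2 ^ a - j) = Dk ρ (2 ^ a) - Wp ρ (2 ^ a - 1) * Dk ρ j := by
  induction j with
  | zero => simp [Dk]
  | succ j ih =>
    have h1 := ih (by omega)
    have h2 : Dk ρ (2 ^ a - j) = Dk ρ (2 ^ a - (j+1)) + Wp ρ (2 ^ a - (j+1)) := by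
      have : 2 ^ a - j = (2 ^ a - (j+1)) + 1 := by omega
      rw [this]; unfold Dk; rw [Finset.sum_range_succ]
    have h3 : Dk ρ (j+1) = Dk ρ j + Wp ρ j := by unfold Dk; rw [Finset.sum_range_succ]
    rw [h3, mul_add, ← Wp_compl h a j (by omega)]
    linarith

lemma Wp_mul_Dk {ρ : ℕ → ℝ} (h : IsSgn ρ) (a r : ℕ) (hr : r < 2 ^ a) :
    Wp ρ r * Dk ρ (2 ^ a) = Dk ρ (2 ^ a) := by
  rw [Wp_eq ρ r a hr, Dk_pow, ← Finset.prod_mul_distrib]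
  apply Finset.prod_congr rfl
  intro k _
  have := h k
  split_ifs
  · linear_combination this
  · ring

/-- Nörlund sum. -/
def Nk (ρ : ℕ → ℝ) (n : ℕ) : ℝ := ∑ i ∈ Finset.range n, Dk ρ (n - (i+1)) / (i + 1)

def Vk (ρ : ℕ → ℝ) (a r : ℕ) : ℝ := ∑ j ∈ Finset.range (2^a), (1 / ((r:ℝ) + j + 1)) * Dk ρ (j+1)

lemma Hs_add (r m : ℕ) : Hs (r + m) = Hs r + ∑ j ∈ Finset.range m, (1 / ((r:ℝ) + j + 1)) := by
  unfold Hs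
  rw [Finset.sum_range_add]; simp

lemma Nk_add {ρ : ℕ → ℝ} (h : IsSgn ρ) (a r : ℕ) (hr : r < 2 ^ a) :
    Nk ρ (2 ^ a + r) = Hs (2 ^ a + r) * Dk ρ (2 ^ a) - Wp ρ (2 ^ a - 1) * Vk ρ a r + ρ a * Nk ρ r := by
  unfold Nk
  rw [add_comm (2^a) r, Finset.sum_range_add]
  have e1 : ∑ i ∈ Finset.range r, Dk ρ (r + 2 ^ a - (i+1)) / ((i:ℝ) + 1) =
      Hs r * Dk ρ (2 ^ a) + ρ a * ∑ i ∈ Finset.range r, Dk ρ (r - (i+1)) / ((i:ℝ) + 1) := by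
    unfold Hs
    rw [Finset.sum_mul, Finset.mul_sum, ← Finset.sum_add_distrib]
    apply Finset.sum_congr rfl
    intro i hi
    have hi' : i < r := by simpa using hi
    have : r + 2 ^ a - (i+1) = 2 ^ a + (r - (i+1)) := by omega
    rw [this, Dk_add ρ a _ (by omega)]; ring
  have e2 : ∑ j ∈ Finset.range (2^a), Dk ρ (r + 2 ^ a - (r + j + 1)) / (((r + j : ℕ):ℝ) + 1) =
      (∑ j ∈ Finset.range (2^a), (1 / ((r:ℝ) + j + 1))) * Dk ρ (2 ^ a) - Wp ρ (2 ^ a - 1) * Vk ρ a r := by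
    unfold Vk
    rw [Finset.sum_mul, Finset.mul_sum, ← Finset.sum_sub_distrib]
    apply Finset.sum_congr rfl
    intro j hj
    have hj' : j < 2 ^ a := by simpa using hj
    have : r + 2 ^ a - (r + j + 1) = 2 ^ a - (j + 1) := by omega
    rw [this, Dk_compl h a _ (by omega)]; push_cast; ring
  rw [e1, e2, Hs_add]; ring

/-- Abel summation. -/
lemma abel_sum (c : ℕ → ℝ) (u : ℕ → ℝ) (N : ℕ) :
    ∑ j ∈ Finset.range (N+1), c j * u j =
      c N * ∑ j ∈ Finset.range (N+1), u j +
      ∑ j ∈ Finset.range N, (c j - c (j+1)) * ∑ i ∈ Finset.range (j+1), u i := by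
  induction N with
  | zero => simp
  | succ N ih =>
    rw [Finset.sum_range_succ, ih, Finset.sum_range_succ (fun j => (c j - c (j+1)) * _), Finset.sum_range_succ u (N+1)]
    ring

def Phi (ρ : ℕ → ℝ) (k : ℕ) : ℝ := ∑ j ∈ Finset.range k, Dk ρ (j + 1)

lemma Phi_add (ρ : ℕ → ℝ) (a r : ℕ) (hr : r ≤ 2 ^ a) :
    Phi ρ (2 ^ a + r) = Phi ρ (2 ^ a) + r * Dk ρ (2 ^ a) + ρ a * Phi ρ r := by
  unfold Phi
  rw [Finset.sum_range_add]
  have : ∑ x ∈ Finset.range r, Dk ρ (2 ^ a + x + 1) = r * Dk ρ (2 ^ a) + ρ a * ∑ x ∈ Finset.range r, Dk ρ (x + 1) := by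
    rw [Finset.mul_sum]
    have : (r:ℝ) * Dk ρ (2^a) = ∑ x ∈ Finset.range r, Dk ρ (2 ^ a) := by simp
    rw [this, ← Finset.sum_add_distrib]
    apply Finset.sum_congr rfl
    intro i hi
    have hi' : i < r := by simpa using hi
    rw [add_assoc, Dk_add ρ a _ (by omega)]
  rw [this]; ring

def ex {α : Type*} [Fintype α] (F : α → ℝ) : ℝ := (Fintype.card α : ℝ)⁻¹ * ∑ x, F x

section exlemmas
variable {α β : Type*} [Fintype α] [Fintype β]

lemma ex_add (F G : α → ℝ) : ex (fun x => F x + G x) = ex F + ex G := by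
  unfold ex; rw [Finset.sum_add_distrib, mul_add]

lemma ex_sub (F G : α → ℝ) : ex (fun x => F x - G x) = ex F - ex G := by
  unfold ex; rw [Finset.sum_sub_distrib, mul_sub]

lemma ex_mul (c : ℝ) (F : α → ℝ) : ex (fun x => c * F x) = c * ex F := by
  unfold ex; rw [← Finset.mul_sum]; ring

lemma ex_mul_right (c : ℝ) (F : α → ℝ) : ex (fun x => F x * c) = ex F * c := by
  unfold ex; rw [← Finset.sum_mul]; ring

lemma ex_sum {ι : Type*} (s : Finset ι) (F : ι → α → ℝ) :
    ex (fun x => ∑ i ∈ s, F i x) = ∑ i ∈ s, ex (F i) := by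
  unfold ex; rw [Finset.sum_comm, Finset.mul_sum]

lemma ex_mono {F G : α → ℝ} (h : ∀ x, F x ≤ G x) : ex F ≤ ex G := by
  unfold ex
  exact mul_le_mul_of_nonneg_left (Finset.sum_le_sum fun x _ => h x) (by positivity)

lemma ex_nonneg {F : α → ℝ} (h : ∀ x, 0 ≤ F x) : 0 ≤ ex F := by
  unfold ex
  exact mul_nonneg (by positivity) (Finset.sum_nonneg fun x _ => h x)

lemma ex_const [Nonempty α] (c : ℝ) : ex (fun _ : α => c) = c := by
  unfold ex
  have : (Fintype.card α : ℝ) ≠ 0 := by exact_mod_cast Fintype.card_ne_zero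
  simp [this]

lemma abs_ex_le (F : α → ℝ) : |ex F| ≤ ex (fun x => |F x|) := by
  unfold ex
  rw [abs_mul, abs_of_nonneg (by positivity)]
  exact mul_le_mul_of_nonneg_left (Finset.abs_sum_le_sum_abs _ _) (by positivity)

lemma ex_comm (F : α → β → ℝ) : ex (fun x => ex (fun y => F x y)) = ex (fun y => ex (fun x => F x y)) := by
  unfold ex
  simp only [← Finset.mul_sum]
  rw [Finset.sum_comm]; ring

lemma ex_equiv (e : α ≃ α) (F : α → ℝ) : ex (fun x => F (e x)) = ex F := by
  unfold ex; rw [Equiv.sum_comp e F]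

end exlemmas

abbrev XA (A : ℕ) := Fin A → Bool

def sg {A : ℕ} (x : XA A) (k : ℕ) : ℝ :=
  if h : k < A then (if x ⟨k, h⟩ then -1 else 1) else 1

lemma sg_isSgn {A : ℕ} (x : XA A) : IsSgn (sg x) := by
  intro k; unfold sg; split_ifs <;> norm_num

def flipFun {A : ℕ} (a : ℕ) (x : XA A) : XA A := fun k => if k.1 = a then !(x k) else x k

lemma flipFun_inv {A : ℕ} (a : ℕ) : Function.Involutive (flipFun (A := A) a) := by
  intro x; funext k; unfold flipFun; split_ifs <;> simp

def flipE {A : ℕ} (a : ℕ) : XA A ≃ XA A := (flipFun_inv a).toPerm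

lemma flipE_apply {A : ℕ} (a : ℕ) (x : XA A) (k : Fin A) :
    flipE a x k = if k.1 = a then !(x k) else x k := rfl

lemma sg_flip_ne {A : ℕ} {a k : ℕ} (h : k ≠ a) (x : XA A) : sg (flipE a x) k = sg x k := by
  unfold sg; simp only [flipE_apply]; simp [h]

lemma sg_flip_eq {A : ℕ} {a : ℕ} (h : a < A) (x : XA A) : sg (flipE a x) a = - sg x a := by
  unfold sg; simp only [flipE_apply]; simp only [h, dite_true]
  cases x ⟨a, h⟩ <;> simp

lemma Wp_congr {ρ σ : ℕ → ℝ} {a n : ℕ} (h : ∀ k < a, ρ k = σ k) (hn : n < 2 ^ a) : Wp ρ n = Wp σ n := by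
  rw [Wp_eq ρ n a hn, Wp_eq σ n a hn]
  apply Finset.prod_congr rfl
  intro k hk
  rw [h k (by simpa using hk)]

lemma Dk_congr {ρ σ : ℕ → ℝ} {a n : ℕ} (h : ∀ k < a, ρ k = σ k) (hn : n ≤ 2 ^ a) : Dk ρ n = Dk σ n := by
  unfold Dk
  apply Finset.sum_congr rfl
  intro j hj
  exact Wp_congr h (lt_of_lt_of_le (by simpa using hj) hn)

lemma Phi_congr {ρ σ : ℕ → ℝ} {a n : ℕ} (h : ∀ k < a, ρ k = σ k) (hn : n ≤ 2 ^ a) : Phi ρ n = Phi σ n := by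
  unfold Phi
  apply Finset.sum_congr rfl
  intro j hj
  have : j < n := by simpa using hj
  exact Dk_congr h (by omega)

/-- If `κ` depends only on coordinates other than `a`, `ρ_a κ` has zero mean. -/
lemma ex_rho_mul {A a : ℕ} (ha : a < A) (x : XA A) (κ : (ℕ → ℝ) → ℝ)
    (hκ : ∀ ρ σ : ℕ → ℝ, (∀ k < a, ρ k = σ k) → κ ρ = κ σ) :
    ex (fun t : XA A => (sg x * sg t) a * κ (sg x * sg t)) = 0 := by
  have h1 := ex_equiv (flipE (A := A) a) (fun t : XA A => (sg x * sg t) a * κ (sg x * sg t))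
  have h2 : (fun t : XA A => (sg x * sg (flipE a t)) a * κ (sg x * sg (flipE a t))) =
      fun t : XA A => (-1) * ((sg x * sg t) a * κ (sg x * sg t)) := by
    funext t
    rw [hκ (sg x * sg (flipE a t)) (sg x * sg t)]
    · simp only [Pi.mul_apply, sg_flip_eq ha]; ring
    · intro k hk
      simp only [Pi.mul_apply]
      rw [sg_flip_ne (by omega)]
  rw [h2, ex_mul] at h1
  linarith

def nrm {A : ℕ} (x : XA A) (κ : (ℕ → ℝ) → ℝ) : ℝ := ex (fun t : XA A => |κ (sg x * sg t)|)

lemma nrm_add {A : ℕ} (x : XA A) (κ μ : (ℕ → ℝ) → ℝ) : nrm x (fun ρ => κ ρ + μ ρ) ≤ nrm x κ + nrm x μ := by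
  unfold nrm; rw [← ex_add]; exact ex_mono fun t => abs_add_le _ _

lemma nrm_mul {A : ℕ} (x : XA A) (c : ℝ) (κ : (ℕ → ℝ) → ℝ) : nrm x (fun ρ => c * κ ρ) = |c| * nrm x κ := by
  unfold nrm; rw [← ex_mul]; congr 1; funext t; rw [abs_mul]

lemma nrm_sum {A : ℕ} {ι : Type*} (x : XA A) (s : Finset ι) (κ : ι → (ℕ → ℝ) → ℝ) :
    nrm x (fun ρ => ∑ i ∈ s, κ i ρ) ≤ ∑ i ∈ s, nrm x (κ i) := by
  unfold nrm; rw [← ex_sum]; exact ex_mono fun t => Finset.abs_sum_le_sum_abs _ _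

lemma nrm_sgn_mul {A : ℕ} (x : XA A) (θ κ : (ℕ → ℝ) → ℝ) (h : ∀ ρ, IsSgn ρ → |θ ρ| = 1) :
    nrm x (fun ρ => θ ρ * κ ρ) = nrm x κ := by
  unfold nrm; congr 1; funext t
  rw [abs_mul, h _ ((sg_isSgn x).mul (sg_isSgn t)), one_mul]

lemma Dk_pow_nonneg {ρ : ℕ → ℝ} (h : IsSgn ρ) (a : ℕ) : 0 ≤ Dk ρ (2 ^ a) := by
  rw [Dk_pow]
  apply Finset.prod_nonneg
  intro k _
  have := h.abs k
  have := neg_abs_le (ρ k)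
  linarith

lemma ex_Dk_pow {A a : ℕ} (ha : a ≤ A) (x : XA A) : ex (fun t : XA A => Dk (sg x * sg t) (2 ^ a)) = 1 := by
  induction a with
  | zero => simp [Dk, Wp, ex_const]
  | succ a ih =>
    have : (fun t : XA A => Dk (sg x * sg t) (2 ^ (a+1))) =
        fun t : XA A => Dk (sg x * sg t) (2 ^ a) + (sg x * sg t) a * Dk (sg x * sg t) (2 ^ a) := by
      funext t; rw [pow_succ, mul_two, Dk_add _ a _ le_rfl]
    rw [this, ex_add, ih (by omega), ex_rho_mul (by omega) x (fun ρ => Dk ρ (2 ^ a)), add_zero]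
    intro ρ σ h; exact Dk_congr h le_rfl

lemma nrm_Dk_pow {A a : ℕ} (ha : a ≤ A) (x : XA A) : nrm x (fun ρ => Dk ρ (2 ^ a)) = 1 := by
  rw [← ex_Dk_pow ha x]; unfold nrm; congr 1; funext t
  exact abs_of_nonneg (Dk_pow_nonneg ((sg_isSgn x).mul (sg_isSgn t)) a)

lemma nrm_Phi_pow {A a : ℕ} (ha : a ≤ A) (x : XA A) : nrm x (fun ρ => Phi ρ (2 ^ a)) ≤ 2 ^ a := by
  induction a with
  | zero => 
    have := nrm_Dk_pow (Nat.zero_le A) x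
    simpa [Phi] using this.le
  | succ a ih =>
    have hc : ∀ ρ : ℕ → ℝ, Phi ρ (2 ^ (a+1)) = (1 + ρ a) * Phi ρ (2 ^ a) + 2 ^ a * Dk ρ (2 ^ a) := by
      intro ρ; rw [pow_succ, mul_two, Phi_add _ a _ le_rfl]; push_cast; ring
    simp only [hc]
    refine (nrm_add x _ _).trans ?_
    rw [nrm_mul x (2 ^ a) (fun ρ => Dk ρ (2 ^ a)), nrm_Dk_pow (by omega)]
    have : nrm x (fun ρ => (1 + ρ a) * Phi ρ (2 ^ a)) = nrm x (fun ρ => Phi ρ (2 ^ a)) := by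
      unfold nrm
      have e : (fun t : XA A => |(1 + (sg x * sg t) a) * Phi (sg x * sg t) (2 ^ a)|) =
          fun t : XA A => |Phi (sg x * sg t) (2 ^ a)| + (sg x * sg t) a * |Phi (sg x * sg t) (2 ^ a)| := by
        funext t
        have := ((sg_isSgn x).mul (sg_isSgn t)).abs a
        have := neg_abs_le ((sg x * sg t) a)
        rw [abs_mul, abs_of_nonneg (a := 1 + _) (by linarith)]; ring
      rw [e, ex_add, ex_rho_mul (by omega) x (fun ρ => |Phi ρ (2 ^ a)|), add_zero]
      intro ρ σ h; rw [Phi_congr h le_rfl]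
    rw [this, pow_succ, abs_of_nonneg (by positivity)]
    linarith [ih (by omega)]

lemma exists_pow_add (k : ℕ) (hk : 0 < k) : ∃ a r, k = 2 ^ a + r ∧ r < 2 ^ a := by
  refine ⟨Nat.log 2 k, k - 2 ^ Nat.log 2 k, ?_, ?_⟩
  · have := Nat.pow_log_le_self 2 hk.ne'; omega
  · have := Nat.lt_pow_succ_log_self (b := 2) (by norm_num) k
    rw [pow_succ] at this; omega

lemma nrm_Phi {A : ℕ} (x : XA A) (k : ℕ) (hk : k < 2 ^ A) : nrm x (fun ρ => Phi ρ k) ≤ 2 * k := by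
  induction k using Nat.strong_induction_on with
  | _ k ih =>
    rcases Nat.eq_zero_or_pos k with rfl | h0
    · simp [Phi, nrm, ex]
    obtain ⟨a, r, rfl, hr⟩ := exists_pow_add k h0
    have haA : a < A := by
      by_contra hcon
      have : 2 ^ A ≤ 2 ^ a := Nat.pow_le_pow_right (by norm_num) (by omega)
      omega
    have h0a : 0 < 2 ^ a := by positivity
    simp only [fun ρ => Phi_add ρ a r hr.le]
    refine (nrm_add x _ _).trans ?_
    refine (add_le_add_left (nrm_add x _ _) _).trans ?_
    rw [nrm_mul x (r:ℝ) (fun ρ => Dk ρ (2 ^ a)), nrm_Dk_pow haA.le,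
      nrm_sgn_mul x (fun ρ => ρ a) (fun ρ => Phi ρ r) (fun ρ h => h.abs a)]
    have h1 := ih r (by omega) (by omega)
    have h2 := nrm_Phi_pow haA.le x
    have h3 : (r:ℝ) ≤ 2 ^ a := by exact_mod_cast hr.le
    rw [abs_of_nonneg (by positivity)]
    push_cast
    linarith

/-- L¹ bound for sums of Dirichlet kernels with monotone coefficients. -/
lemma nrm_monotone_sum {A : ℕ} (x : XA A) (c : ℕ → ℝ) (hc : Antitone c) (hc0 : ∀ j, 0 ≤ c j)
    (N : ℕ) (hN : N < 2 ^ A) :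
    nrm x (fun ρ => ∑ j ∈ Finset.range N, c j * Dk ρ (j + 1)) ≤ 2 * ∑ j ∈ Finset.range N, c j := by
  rcases N with _ | N
  · simp [nrm, ex]
  simp only [fun ρ => abel_sum c (fun j => Dk ρ (j + 1)) N]
  have h1 := abel_sum c (fun _ => 1) N
  simp only [mul_one, Finset.sum_const, Finset.card_range, nsmul_eq_mul] at h1
  rw [h1]
  refine (nrm_add x _ _).trans ?_
  rw [mul_add, Finset.mul_sum]
  have hnn : ∀ k, k ≤ N → nrm x (fun ρ => ∑ j ∈ Finset.range (k+1), Dk ρ (j + 1)) ≤ 2 * ((k+1:ℕ):ℝ) := by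
    intro k hk
    exact nrm_Phi x (k+1) (by omega)
  apply add_le_add
  · rw [nrm_mul, abs_of_nonneg (hc0 N)]
    nlinarith [hnn N le_rfl, hc0 N]
  · refine (nrm_sum x _ _).trans ?_
    apply Finset.sum_le_sum
    intro j hj
    have hj' : j < N := by simpa using hj
    have hd : 0 ≤ c j - c (j+1) := sub_nonneg.2 (hc (Nat.le_succ j))
    rw [nrm_mul, abs_of_nonneg hd]
    nlinarith [hnn j hj'.le]

lemma Hs_nonneg (n : ℕ) : 0 ≤ Hs n := by unfold Hs; positivity

lemma Hs_mono {m n : ℕ} (h : m ≤ n) : Hs m ≤ Hs n := by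
  unfold Hs
  exact Finset.sum_le_sum_of_subset_of_nonneg (by simpa using h) (fun i _ _ => by positivity)

/-- Structure of the Dirichlet kernel. -/
lemma Dk_decomp (n : ℕ) : ∃ v : ℕ → ℝ, (∀ a, |v a| ≤ 1) ∧ (∀ a, n < 2 ^ a → v a = 0) ∧
    ∀ A, n < 2 ^ A → ∀ ρ, IsSgn ρ →
      Dk ρ n = Wp ρ n * ∑ a ∈ Finset.range A, v a * (ρ a * Dk ρ (2 ^ a)) := by
  induction n using Nat.strong_induction_on with
  | _ k ih =>
    rcases Nat.eq_zero_or_pos k with rfl | h0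
    · exact ⟨fun _ => 0, by simp, by simp, by simp [Dk]⟩
    obtain ⟨a, r, rfl, hr⟩ := exists_pow_add k h0
    obtain ⟨v, hv1, hv2, hv3⟩ := ih r (by omega)
    refine ⟨Function.update v a 1, ?_, ?_, ?_⟩
    · intro b; by_cases hb : b = a
      · subst hb; simp
      · simp [hb, hv1]
    · intro b hb
      have hba : b ≠ a := by rintro rfl; omega
      simp only [Function.update_of_ne hba]; exact hv2 b (by omega)
    · intro A hA ρ hρ
      have haA : a < A := by
        by_contra hcon
        have : 2 ^ A ≤ 2 ^ a := Nat.pow_le_pow_right (by norm_num) (by omega)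
        omega
      rw [Dk_add ρ a r hr.le, Wp_add ρ a r hr, hv3 A (by omega) ρ hρ]
      have e : ∑ b ∈ Finset.range A, Function.update v a 1 b * (ρ b * Dk ρ (2 ^ b)) =
          ρ a * Dk ρ (2 ^ a) + ∑ b ∈ Finset.range A, v b * (ρ b * Dk ρ (2 ^ b)) := by
        have : ∀ b ∈ Finset.range A, Function.update v a 1 b * (ρ b * Dk ρ (2 ^ b)) =
           (if b = a then ρ a * Dk ρ (2 ^ a) else 0) + v b * (ρ b * Dk ρ (2 ^ b)) := by
          intro b _
          by_cases hb : b = a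
          · subst hb; simp [hv2 b hr]
          · simp [hb]
        rw [Finset.sum_congr rfl this, Finset.sum_add_distrib]
        simp [haA]
      rw [e]
      have h1 := Wp_mul_Dk hρ a r hr
      have h2 := hρ a
      linear_combination (-1 : ℝ) * h1 - (Wp ρ r * Dk ρ (2^a)) * h2

/-- Structure of the Nörlund kernel. -/
lemma Nk_decomp (n : ℕ) : ∃ (v : ℕ → ℝ) (e : (ℕ → ℝ) → ℝ), (∀ a, |v a| ≤ Hs n) ∧
    (∀ a, n < 2 ^ a → v a = 0) ∧
    (∀ A, n < 2 ^ A → ∀ x : XA A, nrm x e ≤ 2 * Hs n) ∧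
    ∀ A, n < 2 ^ A → ∀ ρ, IsSgn ρ →
      Nk ρ n = Wp ρ n * ∑ a ∈ Finset.range A, v a * (ρ a * Dk ρ (2 ^ a)) + e ρ := by
  induction n using Nat.strong_induction_on with
  | _ k ih =>
    rcases Nat.eq_zero_or_pos k with rfl | h0
    · exact ⟨fun _ => 0, fun _ => 0, by simp [Hs], by simp, by simp [nrm, ex, Hs], by simp [Nk]⟩
    obtain ⟨a, r, rfl, hr⟩ := exists_pow_add k h0
    obtain ⟨v, e, hv1, hv2, he, hv3⟩ := ih r (by omega)
    have hHr : Hs r ≤ Hs (2 ^ a + r) := Hs_mono (by omega)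
    have haA : ∀ A, 2 ^ a + r < 2 ^ A → a < A := by
        intro A hA
        by_contra hcon
        have : 2 ^ A ≤ 2 ^ a := Nat.pow_le_pow_right (by norm_num) (by omega)
        omega
    refine ⟨Function.update v a (Hs (2 ^ a + r)), 
      fun ρ => (-1) * (Wp ρ (2 ^ a - 1) * Vk ρ a r) + ρ a * e ρ, ?_, ?_, ?_, ?_⟩
    · intro b; by_cases hb : b = a
      · subst hb; simp [abs_of_nonneg (Hs_nonneg _)]
      · simp only [Function.update_of_ne hb]; exact (hv1 b).trans hHr
    · intro b hb
      have hba : b ≠ a := by rintro rfl; omega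
      simp only [Function.update_of_ne hba]; exact hv2 b (by omega)
    · intro A hA x
      refine (nrm_add x _ _).trans ?_
      rw [nrm_sgn_mul x (fun ρ => ρ a) e (fun ρ h => h.abs a), nrm_mul,
        nrm_sgn_mul x (fun ρ => Wp ρ (2 ^ a - 1)) (fun ρ => Vk ρ a r) (fun ρ h => Wp_abs h _)]
      have h1 := he A (by omega) x
      have h2 := nrm_monotone_sum x (fun j => 1 / ((r:ℝ) + j + 1)) 
        (by intro i j hij
            have : (i:ℝ) ≤ j := by exact_mod_cast hij
            exact one_div_le_one_div_of_le (by positivity) (by linarith))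
        (by intro j; positivity) (2 ^ a) (by omega)
      have h3 := Hs_add r (2 ^ a)
      have h4 : nrm x (fun ρ => Vk ρ a r) ≤ 2 * ∑ j ∈ Finset.range (2^a), (1 / ((r:ℝ) + j + 1)) := h2
      rw [add_comm (2^a) r, h3]
      simp only [abs_neg, abs_one, one_mul]
      linarith
    · intro A hA ρ hρ
      have haA := haA A hA
      rw [Nk_add hρ a r hr, Wp_add ρ a r hr, hv3 A (by omega) ρ hρ]
      have e : ∑ b ∈ Finset.range A, Function.update v a (Hs (2 ^ a + r)) b * (ρ b * Dk ρ (2 ^ b)) =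
          Hs (2 ^ a + r) * (ρ a * Dk ρ (2 ^ a)) + ∑ b ∈ Finset.range A, v b * (ρ b * Dk ρ (2 ^ b)) := by
        have : ∀ b ∈ Finset.range A, Function.update v a (Hs (2 ^ a + r)) b * (ρ b * Dk ρ (2 ^ b)) =
           (if b = a then Hs (2 ^ a + r) * (ρ a * Dk ρ (2 ^ a)) else 0) + v b * (ρ b * Dk ρ (2 ^ b)) := by
          intro b _
          by_cases hb : b = a
          · subst hb; simp [hv2 b hr]
          · simp [hb]
        rw [Finset.sum_congr rfl this, Finset.sum_add_distrib]
        simp [haA]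
      rw [e]
      have h1 := Wp_mul_Dk hρ a r hr
      have h2 := hρ a
      linear_combination (-1 : ℝ) * Hs (2^a+r) * h1 - Hs (2^a+r) * (Wp ρ r * Dk ρ (2^a)) * h2

def op {A : ℕ} (κ : (ℕ → ℝ) → ℝ) (F : XA A → ℝ) (x : XA A) : ℝ :=
  ex (fun t : XA A => κ (sg x * sg t) * F t)

lemma Dk_full {A : ℕ} (x t : XA A) : Dk (sg x * sg t) (2 ^ A) = if t = x then 2 ^ A else 0 := by
  rw [Dk_pow]
  split_ifs with h
  · subst h
    rw [Finset.prod_congr rfl (g := fun _ => (2:ℝ))]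
    · simp
    · intro k _
      have := sg_isSgn t k
      simp only [Pi.mul_apply]; linarith
  · obtain ⟨k, hk⟩ := Function.ne_iff.1 h
    apply Finset.prod_eq_zero (i := k.1) (by simp)
    simp only [Pi.mul_apply, sg, k.2, dite_true]
    revert hk
    cases t k <;> cases x k <;> simp

lemma op_id {A : ℕ} (F : XA A → ℝ) (x : XA A) : op (fun ρ => Dk ρ (2 ^ A)) F x = F x := by
  unfold op ex
  simp [Dk_full]

def Zig (U : ℝ → ℝ → ℝ) : Prop :=
  ∀ x y a b : ℝ, |b| ≤ |a| → U (x + a) (y + b) + U (x - a) (y - b) ≤ 2 * U x y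

def mtK (A : ℕ) (v : ℕ → ℝ) (ρ : ℕ → ℝ) : ℝ := ∑ a ∈ Finset.range A, v a * (ρ a * Dk ρ (2 ^ a))

lemma op_mtK {A : ℕ} (B : ℕ) (v : ℕ → ℝ) (F : XA A → ℝ) (x : XA A) :
    op (mtK B v) F x = ∑ a ∈ Finset.range B, v a * op (fun ρ => ρ a * Dk ρ (2 ^ a)) F x := by
  unfold op mtK
  simp only [← ex_mul]
  rw [← ex_sum]; congr 1; funext t
  rw [Finset.sum_mul]; apply Finset.sum_congr rfl; intros; ring

lemma burkholder_step {U : ℝ → ℝ → ℝ} (hU : Zig U) {A : ℕ} (v : ℕ → ℝ) (hv : ∀ a, |v a| ≤ 1)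
    (F : XA A → ℝ) (a : ℕ) (ha : a ≤ A) :
    ex (fun x => U (op (fun ρ => Dk ρ (2 ^ a)) F x) (op (mtK a v) F x)) ≤ U (ex F) 0 := by
  induction a with
  | zero =>
    have : ∀ x, op (fun ρ => Dk ρ (2 ^ 0)) F x = ex F := by
      intro x; unfold op; simp [Dk, Wp]
    simp only [this]
    simp [mtK, op, ex_const]
  | succ a ih =>
    refine le_trans ?_ (ih (by omega))
    set E := op (A := A) (fun ρ => Dk ρ (2 ^ a)) F with hE
    set M := op (A := A) (mtK a v) F with hM
    set Δ := op (A := A) (fun ρ => ρ a * Dk ρ (2 ^ a)) F with hΔ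
    have e1 : ∀ x, op (fun ρ => Dk ρ (2 ^ (a+1))) F x = E x + Δ x := by
      intro x; rw [hE, hΔ]; unfold op; rw [← ex_add]; congr 1; funext t; beta_reduce
      rw [pow_succ, mul_two, Dk_add _ a _ le_rfl]; ring
    have e2 : ∀ x, op (mtK (a+1) v) F x = M x + v a * Δ x := by
      intro x; rw [hM, hΔ, op_mtK, op_mtK, Finset.sum_range_succ]
    have hloc : ∀ (x t : XA A), ∀ k < a, (sg (flipE a x) * sg t) k = (sg x * sg t) k := by
      intro x t k hk
      simp only [Pi.mul_apply]; rw [sg_flip_ne (by omega)]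
    have f1 : ∀ x, E (flipE a x) = E x := by
      intro x; rw [hE]; unfold op; congr 1; funext t; beta_reduce
      rw [Dk_congr (hloc x t) le_rfl]
    have f3 : ∀ x, Δ (flipE a x) = - Δ x := by
      intro x; rw [hΔ]; unfold op
      rw [neg_eq_neg_one_mul, ← ex_mul]; congr 1; funext t; beta_reduce
      rw [Dk_congr (hloc x t) le_rfl]
      simp only [Pi.mul_apply, sg_flip_eq (show a < A by omega)]; ring
    have f2 : ∀ x, M (flipE a x) = M x := by
      intro x; rw [hM, op_mtK, op_mtK]
      apply Finset.sum_congr rfl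
      intro b hb
      have hb' : b < a := by simpa using hb
      congr 1
      unfold op; congr 1; funext t; beta_reduce
      rw [Dk_congr (a := a) (hloc x t) (Nat.pow_le_pow_right (by norm_num) hb'.le), hloc x t b hb']
    simp only [e1, e2]
    have h1 := ex_equiv (flipE (A := A) a) (fun x => U (E x + Δ x) (M x + v a * Δ x))
    simp only [f1, f2, f3] at h1
    have h2 : ex (fun x => U (E x + Δ x) (M x + v a * Δ x)) + 
        ex (fun x => U (E x + -Δ x) (M x + v a * -Δ x)) ≤ 2 * ex (fun x => U (E x) (M x)) := by
      rw [← ex_add, ← ex_mul]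
      apply ex_mono
      intro x
      have := hU (E x) (M x) (Δ x) (v a * Δ x) (by
        rw [abs_mul]; nlinarith [hv a, abs_nonneg (Δ x)])
      have e : M x + v a * -Δ x = M x - v a * Δ x := by ring
      rw [e, ← sub_eq_add_neg]; exact this
    linarith

lemma burkholder {U : ℝ → ℝ → ℝ} (hU : Zig U) {A : ℕ} (v : ℕ → ℝ) (hv : ∀ a, |v a| ≤ 1)
    (F : XA A → ℝ) : ex (fun x => U (F x) (op (mtK A v) F x)) ≤ U (ex F) 0 := by
  have := burkholder_step hU v hv F A le_rfl
  simpa only [op_id] using this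

/-- Burkholder's weak-type function. -/
def uw (x y : ℝ) : ℝ := if |x| + |y| < 1 then y ^ 2 - x ^ 2 else 1 - 2 * |x|

lemma uw_le (x y : ℝ) : uw x y ≤ 1 - 2 * |x| := by
  unfold uw
  split_ifs with h
  · have h1 : y ^ 2 = |y| ^ 2 := (sq_abs y).symm
    have h2 : x ^ 2 = |x| ^ 2 := (sq_abs x).symm
    rw [h1, h2]
    nlinarith [abs_nonneg x, abs_nonneg y]
  · exact le_rfl

lemma uw_tangent (x y a b : ℝ) (h : |x| + |y| < 1) (hab : |b| ≤ |a|) :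
    uw (x + a) (y + b) ≤ y ^ 2 - x ^ 2 + (2 * y * b - 2 * x * a) := by
  have hba : b ^ 2 ≤ a ^ 2 := sq_le_sq.2 hab
  by_cases h1 : |x + a| ≤ 1
  · have : uw (x + a) (y + b) ≤ (y + b) ^ 2 - (x + a) ^ 2 := by
      unfold uw
      split_ifs with h2
      · exact le_rfl
      · have h3 : 1 - |x + a| ≤ |y + b| := by linarith
        have h4 : (1 - |x + a|) ^ 2 ≤ |y + b| ^ 2 := by
          apply pow_le_pow_left₀ (by linarith) h3
        have h5 := sq_abs (x + a)
        rw [sq_abs] at h4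
        nlinarith
    nlinarith
  · refine (uw_le _ _).trans ?_
    push Not at h1
    have hyb : -(|y| * |a|) ≤ y * b := by
      have := neg_abs_le (y * b)
      rw [abs_mul] at this
      nlinarith [abs_nonneg y]
    have hy2 := sq_abs y
    rcases le_or_gt 0 (x + a) with h2 | h2
    · rw [abs_of_nonneg h2] at h1 ⊢
      have hx := le_abs_self x
      have ha : 0 < a := by linarith [abs_nonneg y]
      rw [abs_of_pos ha] at hyb
      have : 0 ≤ (1 - x - |y|) * (2 * a - (1 - x) - |y|) := 
        mul_nonneg (by linarith) (by linarith)
      nlinarith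
    · rw [abs_of_neg h2] at h1 ⊢
      have hx := neg_abs_le x
      have ha : a < 0 := by linarith [abs_nonneg y]
      rw [abs_of_neg ha] at hyb
      have : 0 ≤ (1 + x - |y|) * (2 * (-a) - (1 + x) - |y|) := 
        mul_nonneg (by linarith) (by linarith)
      nlinarith

lemma uw_zig : Zig uw := by
  intro x y a b hab
  by_cases h : |x| + |y| < 1
  · have h1 := uw_tangent x y a b h hab
    have h2 := uw_tangent x y (-a) (-b) h (by simpa using hab)
    have h3 : uw x y = y ^ 2 - x ^ 2 := by unfold uw; simp [h]
    rw [← sub_eq_add_neg, ← sub_eq_add_neg] at h2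
    linarith
  · have h3 : uw x y = 1 - 2 * |x| := by unfold uw; simp only [h, if_false]
    have h1 := uw_le (x + a) (y + b)
    have h2 := uw_le (x - a) (y - b)
    have h4 : 2 * |x| ≤ |x + a| + |x - a| := by
      have := abs_add_le (x + a) (x - a)
      have e : x + a + (x - a) = 2 * x := by ring
      rw [e, abs_mul, abs_two] at this; exact this
    linarith

lemma uw_ge (x y : ℝ) : (if 1 ≤ |y| then (1:ℝ) else 0) - 2 * |x| ≤ uw x y := by
  unfold uw
  have := abs_nonneg x
  have := abs_nonneg y
  split_ifs with h1 h2 h2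
  · linarith
  · linarith
  · nlinarith [sq_abs x, sq_nonneg y]
  · linarith

lemma uw_zero (x : ℝ) : uw x 0 ≤ 0 := by
  unfold uw
  split_ifs with h
  · nlinarith [sq_nonneg x]
  · simp at h; linarith

lemma mt_weak {A : ℕ} (v : ℕ → ℝ) (hv : ∀ a, |v a| ≤ 1) (F : XA A → ℝ) :
    ex (fun x => if 1 ≤ |op (mtK A v) F x| then (1:ℝ) else 0) ≤ 2 * ex (fun x => |F x|) := by
  have h1 := (burkholder uw_zig v hv F).trans (uw_zero _)
  have h2 := ex_mono (fun x => uw_ge (F x) (op (mtK A v) F x))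
  rw [ex_sub, ex_mul] at h2
  linarith

/-- Function for the Lᵖ bounds. -/
def up (p : ℕ) (x y : ℝ) : ℝ := 4 * y ^ p - ((y + 3 * x) ^ p + (y - 3 * x) ^ p) / 2

lemma second_diff (p : ℕ) (y b : ℝ) :
    (y + b) ^ p + (y - b) ^ p - 2 * y ^ p =
      ∑ k ∈ Finset.range p, (1 + (-1) ^ (k+1)) * (b ^ (k+1) * y ^ (p - (k+1)) * (p.choose (k+1))) := by
  have h1 := add_pow b y p
  have h2 := add_pow (-b) y p
  rw [Finset.sum_range_succ'] at h1 h2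
  have e1 : (y + b) = b + y := by ring
  have e2 : (y - b) = -b + y := by ring
  rw [e1, e2, h1, h2]
  simp only [pow_zero, Nat.choose_zero_right, Nat.cast_one, Nat.sub_zero]
  have : ∀ S T : ℝ, (S + 1 * y ^ p * 1) + (T + 1 * y ^ p * 1) - 2 * y ^ p = S + T := by intros; ring
  rw [this, ← Finset.sum_add_distrib]
  apply Finset.sum_congr rfl
  intro k _
  rw [neg_pow b]; ring

lemma term_ineq (k j : ℕ) (hk : 1 ≤ k) (x y a b : ℝ) (hab : |b| ≤ |a|) :
    4 * (b ^ (2*k) * y ^ (2*j)) ≤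
      ((b + 3 * a) ^ (2*k) * (y + 3 * x) ^ (2*j) + (b - 3 * a) ^ (2*k) * (y - 3 * x) ^ (2*j)) / 2 := by
  have hb : ∀ β : ℝ, 2 * |b| ≤ |β| → 4 * b ^ (2*k) ≤ β ^ (2*k) := by
    intro β hβ
    have h1 : (2 * |b|) ^ (2*k) ≤ |β| ^ (2*k) := pow_le_pow_left₀ (by positivity) hβ _
    have e1 : |β| ^ (2*k) = β ^ (2*k) := by rw [pow_mul, pow_mul, sq_abs]
    have e2 : |b| ^ (2*k) = b ^ (2*k) := by rw [pow_mul, pow_mul, sq_abs]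
    rw [e1, mul_pow, e2] at h1
    have h4 : (4:ℝ) ≤ 2 ^ (2*k) := by
      rw [pow_mul]; norm_num
      calc (4:ℝ) = 4 ^ 1 := by norm_num
        _ ≤ 4 ^ k := pow_le_pow_right₀ (by norm_num) hk
    have h5 : 0 ≤ b ^ (2*k) := by rw [pow_mul]; positivity
    nlinarith
  have h3a : |3 * a| = 3 * |a| := by rw [abs_mul]; norm_num
  have hp := hb (b + 3 * a) (by
    have := abs_sub_abs_le_abs_sub (3 * a) (-b)
    rw [abs_neg, sub_neg_eq_add, add_comm (3 * a)] at this; linarith)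
  have hm := hb (b - 3 * a) (by
    have := abs_sub_abs_le_abs_sub (3 * a) b
    rw [abs_sub_comm (3*a) b] at this; linarith)
  have hcv : 2 * y ^ (2*j) ≤ (y + 3 * x) ^ (2*j) + (y - 3 * x) ^ (2*j) := by
    have hc : ConvexOn ℝ Set.univ (fun z : ℝ => z ^ (2*j)) := (even_two_mul j).convexOn_pow
    have := hc.2 (Set.mem_univ (y + 3 * x)) (Set.mem_univ (y - 3 * x))
      (show (0:ℝ) ≤ 1/2 by norm_num) (show (0:ℝ) ≤ 1/2 by norm_num) (by norm_num)
    simp only [smul_eq_mul] at this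
    have e : 1/2 * (y + 3 * x) + 1/2 * (y - 3 * x) = y := by ring
    rw [e] at this; linarith
  have p1 : 0 ≤ (y + 3 * x) ^ (2*j) := by rw [pow_mul]; positivity
  have p2 : 0 ≤ (y - 3 * x) ^ (2*j) := by rw [pow_mul]; positivity
  have p3 : 0 ≤ b ^ (2*k) := by rw [pow_mul]; positivity
  have q1 := mul_le_mul_of_nonneg_right hp p1
  have q2 := mul_le_mul_of_nonneg_right hm p2
  have q3 := mul_le_mul_of_nonneg_left hcv p3
  linarith

lemma up_zig (m : ℕ) : Zig (up (2 * m)) := by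
  intro x y a b hab
  have h0 := second_diff (2*m) y b
  have h1 := second_diff (2*m) (y + 3 * x) (b + 3 * a)
  have h2 := second_diff (2*m) (y - 3 * x) (b - 3 * a)
  have key : 4 * (∑ k ∈ Finset.range (2*m), (1 + (-1 : ℝ) ^ (k+1)) * (b ^ (k+1) * y ^ (2*m - (k+1)) * ((2*m).choose (k+1)))) ≤
      ((∑ k ∈ Finset.range (2*m), (1 + (-1 : ℝ) ^ (k+1)) * ((b + 3 * a) ^ (k+1) * (y + 3 * x) ^ (2*m - (k+1)) * ((2*m).choose (k+1)))) + 
      ∑ k ∈ Finset.range (2*m), (1 + (-1 : ℝ) ^ (k+1)) * ((b - 3 * a) ^ (k+1) * (y - 3 * x) ^ (2*m - (k+1)) * ((2*m).choose (k+1)))) / 2 := by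
    rw [← Finset.sum_add_distrib, Finset.mul_sum, Finset.sum_div]
    apply Finset.sum_le_sum
    intro k hk
    have hk' : k < 2 * m := by simpa using hk
    rcases Nat.even_or_odd (k+1) with he | ho
    · obtain ⟨l, hl⟩ := he.two_dvd
      have := term_ineq l (m - l) (by omega) x y a b hab
      have e : 2 * m - (k+1) = 2 * (m - l) := by omega
      rw [e, he.neg_one_pow, hl]
      have hc : (0:ℝ) ≤ ((2*m).choose (2*l)) := by positivity
      have := mul_le_mul_of_nonneg_right this hc
      linarith
    · rw [ho.neg_one_pow]; simp
  unfold up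
  have e1 : y + b + 3 * (x + a) = y + 3 * x + (b + 3 * a) := by ring
  have e2 : y + b - 3 * (x + a) = y - 3 * x + (b - 3 * a) := by ring
  have e3 : y - b + 3 * (x - a) = y + 3 * x - (b + 3 * a) := by ring
  have e4 : y - b - 3 * (x - a) = y - 3 * x - (b - 3 * a) := by ring
  rw [e1, e2, e3, e4]
  linarith

lemma up_ge (m : ℕ) (hm : 1 ≤ m) (x y : ℝ) :
    y ^ (2*m) - (6 * ((2*m : ℕ) : ℝ)) ^ (2*m) * x ^ (2*m) ≤ up (2*m) x y := by
  set p := 2 * m with hp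
  have hev : ∀ z : ℝ, z ^ p = |z| ^ p := by intro z; rw [hp, pow_mul, pow_mul, sq_abs]
  have hp1 : (1:ℝ) ≤ (p:ℝ) := by exact_mod_cast (by omega : 1 ≤ p)
  have h1 : (y + 3 * x) ^ p ≤ (|y| + 3 * |x|) ^ p := by
    rw [hev (y + 3 * x)]
    apply pow_le_pow_left₀ (abs_nonneg _)
    have := abs_add_le y (3 * x)
    rw [abs_mul] at this; norm_num at this; exact this
  have h2 : (y - 3 * x) ^ p ≤ (|y| + 3 * |x|) ^ p := by
    rw [hev (y - 3 * x)]
    apply pow_le_pow_left₀ (abs_nonneg _)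
    have := abs_sub y (3 * x)
    rw [abs_mul] at this; norm_num at this; exact this
  have h3 : (|y| + 3 * |x|) ^ p ≤ 3 * |y| ^ p + (6 * (p:ℝ)) ^ p * |x| ^ p := by
    have nx := abs_nonneg x
    have ny := abs_nonneg y
    rcases le_total (3 * p * |x|) |y| with h | h
    · have : |y| + 3 * |x| ≤ |y| * (1 + 1 / p) := by
        have : 3 * |x| ≤ |y| / p := by rw [le_div_iff₀ (by linarith)]; linarith
        have e : |y| * (1 + 1 / p) = |y| + |y| / p := by ring
        rw [e]; linarith
      have h4 : (|y| + 3 * |x|) ^ p ≤ (|y| * (1 + 1 / p)) ^ p := pow_le_pow_left₀ (by positivity) this _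
      have h5 : (1 + 1 / (p:ℝ)) ^ p ≤ 3 := by
        have : (1 + 1 / (p:ℝ)) ≤ Real.exp (1 / p) := by
          have := Real.add_one_le_exp (1 / (p:ℝ)); linarith
        calc (1 + 1 / (p:ℝ)) ^ p ≤ (Real.exp (1 / p)) ^ p := pow_le_pow_left₀ (by positivity) this _
          _ = Real.exp 1 := by rw [← Real.exp_nat_mul]; congr 1; field_simp
          _ ≤ 3 := by linarith [Real.exp_one_lt_d9]
      rw [mul_pow] at h4
      have : 0 ≤ (6 * (p:ℝ)) ^ p * |x| ^ p := by positivity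
      have : 0 ≤ |y| ^ p := by positivity
      nlinarith
    · have : |y| + 3 * |x| ≤ 6 * p * |x| := by nlinarith
      have h4 : (|y| + 3 * |x|) ^ p ≤ (6 * p * |x|) ^ p := pow_le_pow_left₀ (by positivity) this _
      rw [mul_pow] at h4
      have : 0 ≤ |y| ^ p := by positivity
      linarith
  rw [← hev, ← hev] at h3
  unfold up
  linarith

lemma up_zero (m : ℕ) (x : ℝ) (hm : 1 ≤ m) : up (2*m) x 0 ≤ 0 := by
  unfold up
  have h1 : (0:ℝ) ^ (2*m) = 0 := zero_pow (by omega)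
  have h2 : 0 ≤ (0 + 3 * x) ^ (2*m) := by rw [pow_mul]; positivity
  have h3 : 0 ≤ (0 - 3 * x) ^ (2*m) := by rw [pow_mul]; positivity
  rw [h1]; linarith

lemma mt_Lp {A : ℕ} (v : ℕ → ℝ) (hv : ∀ a, |v a| ≤ 1) (F : XA A → ℝ) (m : ℕ) (hm : 1 ≤ m) :
    ex (fun x => (op (mtK A v) F x) ^ (2*m)) ≤ (6 * ((2*m : ℕ) : ℝ)) ^ (2*m) * ex (fun x => F x ^ (2*m)) := by
  have h1 := (burkholder (up_zig m) v hv F).trans (up_zero m _ hm)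
  have h2 := ex_mono (fun x => up_ge m hm (F x) (op (mtK A v) F x))
  rw [ex_sub, ex_mul] at h2
  linarith

lemma Wp_mul' (ρ σ : ℕ → ℝ) (j : ℕ) : Wp (ρ * σ) j = Wp ρ j * Wp σ j := Wp_mul ρ σ j

lemma op_Wp_mtK {A : ℕ} (k : ℕ) (v : ℕ → ℝ) (F : XA A → ℝ) (x : XA A) :
    op (fun ρ => Wp ρ k * mtK A v ρ) F x = Wp (sg x) k * op (mtK A v) (fun t => Wp (sg t) k * F t) x := by
  unfold op; rw [← ex_mul]; congr 1; funext t; beta_reduce; rw [Wp_mul']; ring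

lemma op_congr {A : ℕ} {κ μ : (ℕ → ℝ) → ℝ} (h : ∀ ρ, IsSgn ρ → κ ρ = μ ρ) (F : XA A → ℝ) (x : XA A) :
    op κ F x = op μ F x := by
  unfold op; congr 1; funext t; rw [h _ ((sg_isSgn x).mul (sg_isSgn t))]

lemma sgn_pow_even {w : ℝ} (h : w * w = 1) (z : ℝ) (m : ℕ) : (w * z) ^ (2 * m) = z ^ (2 * m) := by
  rw [mul_pow, pow_mul w, pow_two, h, one_pow, one_mul]

/-- the strong type property -/
def LqB (A : ℕ) (κ : (ℕ → ℝ) → ℝ) (m : ℕ) (C : ℝ) : Prop :=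
  ∀ F : XA A → ℝ, ex (fun x => (op κ F x) ^ (2 * m)) ≤ C ^ (2 * m) * ex (fun x => F x ^ (2 * m))

lemma LqB_Dk {A k : ℕ} (hk : k < 2 ^ A) (m : ℕ) (hm : 1 ≤ m) : LqB A (fun ρ => Dk ρ k) m (6 * ((2 * m : ℕ) : ℝ)) := by
  intro F
  obtain ⟨v, hv, -, hv3⟩ := Dk_decomp k
  have h1 : ∀ x, op (fun ρ => Dk ρ k) F x = Wp (sg x) k * op (mtK A v) (fun t => Wp (sg t) k * F t) x := by
    intro x
    rw [← op_Wp_mtK]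
    exact op_congr (fun ρ hρ => hv3 A hk ρ hρ) F x
  simp only [h1, sgn_pow_even (Wp_sq (sg_isSgn _) k)]
  refine (mt_Lp v hv (fun t => Wp (sg t) k * F t) m hm).trans ?_
  simp only [sgn_pow_even (Wp_sq (sg_isSgn _) k)]
  exact le_rfl

lemma op_sum {A : ℕ} {ι : Type*} (s : Finset ι) (c : ι → ℝ) (κ : ι → (ℕ → ℝ) → ℝ) (F : XA A → ℝ) (x : XA A) :
    op (fun ρ => ∑ i ∈ s, c i * κ i ρ) F x = ∑ i ∈ s, c i * op (κ i) F x := by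
  unfold op
  simp only [← ex_mul]
  rw [← ex_sum]; congr 1; funext t
  rw [Finset.sum_mul]; apply Finset.sum_congr rfl; intros; ring

lemma LqB_avg {A : ℕ} {ι : Type*} (s : Finset ι) (c : ι → ℝ) (hc : ∀ i ∈ s, 0 ≤ c i) (hs : ∑ i ∈ s, c i = 1)
    (κ : ι → (ℕ → ℝ) → ℝ) (m : ℕ) (C : ℝ) (h : ∀ i ∈ s, LqB A (κ i) m C) :
    LqB A (fun ρ => ∑ i ∈ s, c i * κ i ρ) m C := by
  intro F
  have h1 : ∀ x, (op (fun ρ => ∑ i ∈ s, c i * κ i ρ) F x) ^ (2 * m) ≤ ∑ i ∈ s, c i * (op (κ i) F x) ^ (2 * m) := by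
    intro x; rw [op_sum]
    exact Real.pow_arith_mean_le_arith_mean_pow_of_even s c _ hc hs (even_two_mul m)
  refine (ex_mono h1).trans ?_
  rw [ex_sum]
  calc _ ≤ ∑ i ∈ s, c i * (C ^ (2 * m) * ex (fun x => F x ^ (2 * m))) := by
        apply Finset.sum_le_sum; intro i hi
        rw [ex_mul]; exact mul_le_mul_of_nonneg_left (h i hi F) (hc i hi)
    _ = _ := by rw [← Finset.sum_mul, hs, one_mul]

lemma jensen_w {α : Type*} [Fintype α] (w z : α → ℝ) (hw : ∀ t, 0 ≤ w t) (C : ℝ) (hC : ∑ t, w t ≤ C) (q : ℕ) (hq : Even q) (hq1 : 1 ≤ q) :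
    (∑ t, w t * z t) ^ q ≤ C ^ (q - 1) * ∑ t, w t * z t ^ q := by
  set W := ∑ t, w t with hW
  have hW0 : 0 ≤ W := Finset.sum_nonneg fun t _ => hw t
  rcases hW0.eq_or_lt with h0 | h0
  · have : ∀ t, w t = 0 := by
      intro t
      exact (Finset.sum_eq_zero_iff_of_nonneg (fun t _ => hw t)).1 h0.symm t (Finset.mem_univ t)
    simp only [this, zero_mul, Finset.sum_const_zero, mul_zero]
    rw [zero_pow (by omega)]
  · have h1 := Real.pow_arith_mean_le_arith_mean_pow_of_even Finset.univ (fun t => w t / W) z (fun t _ => div_nonneg (hw t) hW0)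
      (by rw [← Finset.sum_div, ← hW, div_self h0.ne']) hq
    have e1 : ∑ t, w t / W * z t = (∑ t, w t * z t) / W := by
      rw [Finset.sum_div]; apply Finset.sum_congr rfl; intros; ring
    have e2 : ∑ t, w t / W * z t ^ q = (∑ t, w t * z t ^ q) / W := by
      rw [Finset.sum_div]; apply Finset.sum_congr rfl; intros; ring
    rw [e1, e2, div_pow, div_le_iff₀ (by positivity)] at h1
    refine h1.trans ?_
    have h2 : 0 ≤ ∑ t, w t * z t ^ q := Finset.sum_nonneg fun t _ => mul_nonneg (hw t) (hq.pow_nonneg _)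
    have h3 : W ^ q = W ^ (q-1) * W := by rw [← pow_succ]; congr 1; omega
    rw [h3]
    have : (∑ t, w t * z t ^ q) / W * (W ^ (q - 1) * W) = W ^ (q-1) * ∑ t, w t * z t ^ q := by
      field_simp
    rw [this]
    gcongr

lemma sg_symm {A : ℕ} (κ : (ℕ → ℝ) → ℝ) (x t : XA A) : κ (sg x * sg t) = κ (sg t * sg x) := by
  rw [mul_comm]

lemma abs_op_le {A : ℕ} (κ : (ℕ → ℝ) → ℝ) (F : XA A → ℝ) (x : XA A) :
    |op κ F x| ≤ ex (fun t => |κ (sg x * sg t)| * |F t|) := by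
  unfold op
  refine (abs_ex_le _).trans (le_of_eq ?_)
  simp only [abs_mul]

lemma LqB_nrm {A : ℕ} (κ : (ℕ → ℝ) → ℝ) (C : ℝ) (h : ∀ x : XA A, nrm x κ ≤ C) (m : ℕ) (hm : 1 ≤ m) : LqB A κ m C := by
  intro F
  have hC : 0 ≤ C := le_trans (ex_nonneg fun t => abs_nonneg _) (h default)
  have h1 : ∀ x, (op κ F x) ^ (2 * m) ≤ C ^ (2 * m - 1) * ex (fun t => |κ (sg x * sg t)| * F t ^ (2 * m)) := by
    intro x
    have := jensen_w (α := XA A) (fun t => (Fintype.card (XA A) : ℝ)⁻¹ * |κ (sg x * sg t)|) (fun t => |F t|)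
      (fun t => by positivity) C (by rw [← Finset.mul_sum]; exact h x) (2 * m) (even_two_mul m) (by omega)
    rw [← (even_two_mul m).pow_abs]
    calc _ ≤ (ex (fun t => |κ (sg x * sg t)| * |F t|)) ^ (2 * m) := by
          gcongr; exact abs_op_le κ F x
      _ ≤ _ := by
          unfold ex
          simp only [mul_assoc] at this
          rw [← Finset.mul_sum, ← Finset.mul_sum] at this
          simpa only [(even_two_mul m).pow_abs] using this
  refine (ex_mono h1).trans ?_
  rw [ex_mul, ex_comm]
  have h2 : ∀ t, ex (fun x : XA A => |κ (sg x * sg t)| * F t ^ (2 * m)) ≤ C * F t ^ (2 * m) := by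
    intro t
    rw [ex_mul_right]
    apply mul_le_mul_of_nonneg_right _ ((even_two_mul m).pow_nonneg _)
    have := h t
    unfold nrm at this
    simpa only [mul_comm (sg t)] using this
  calc _ ≤ C ^ (2 * m - 1) * ex (fun t => C * F t ^ (2 * m)) := by
        gcongr; exact ex_mono h2
    _ = _ := by
        rw [ex_mul, ← mul_assoc, ← pow_succ]; congr 2; omega

lemma L1_nrm {A : ℕ} (κ : (ℕ → ℝ) → ℝ) (C : ℝ) (h : ∀ x : XA A, nrm x κ ≤ C) (F : XA A → ℝ) :
    ex (fun x => |op κ F x|) ≤ C * ex (fun x => |F x|) := by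
  refine (ex_mono (abs_op_le κ F)).trans ?_
  rw [ex_comm, ← ex_mul]
  apply ex_mono
  intro t
  rw [ex_mul_right]
  apply mul_le_mul_of_nonneg_right _ (abs_nonneg _)
  have := h t
  unfold nrm at this
  simpa only [mul_comm (sg t)] using this

def LK (n : ℕ) (ρ : ℕ → ℝ) : ℝ := ∑ i ∈ Finset.Ico 1 n, (1 / (logSum n * i)) * Dk ρ (n - i)
def RK (n : ℕ) (ρ : ℕ → ℝ) : ℝ := ∑ i ∈ Finset.Ico 1 n, (1 / (logSum n * i)) * Dk ρ i

lemma logSum_eq (n : ℕ) : logSum n = ∑ i ∈ Finset.Ico 1 n, (1:ℝ) / i := by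
  unfold logSum
  apply Finset.sum_congr _ (fun _ _ => rfl)
  ext k; simp; omega

lemma logSum_Hs (n : ℕ) : logSum (n + 1) = Hs n := by
  rw [logSum_eq, Finset.sum_Ico_eq_sum_range]
  unfold Hs
  apply Finset.sum_congr rfl
  intro i _; push_cast; ring

lemma logSum_ge_one {n : ℕ} (hn : 2 ≤ n) : 1 ≤ logSum n := by
  obtain ⟨k, rfl⟩ : ∃ k, n = k + 1 + 1 := ⟨n - 2, by omega⟩
  rw [logSum_Hs]
  have := Hs_mono (show 1 ≤ k + 1 by omega)
  have h1 : Hs 1 = 1 := by simp [Hs]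
  linarith

lemma wts_sum {n : ℕ} (hn : 2 ≤ n) : ∑ i ∈ Finset.Ico 1 n, (1 / (logSum n * (i:ℝ))) = 1 := by
  have h := logSum_ge_one hn
  simp only [one_div, mul_inv]
  rw [← Finset.mul_sum]
  simp only [← one_div]
  rw [← logSum_eq, one_div, inv_mul_cancel₀ (by linarith)]

lemma LqB_LK {A n : ℕ} (hn : 2 ≤ n) (hA : n < 2 ^ A) (m : ℕ) (hm : 1 ≤ m) : LqB A (LK n) m (6 * ((2 * m : ℕ) : ℝ)) := by
  have h := logSum_ge_one hn
  exact LqB_avg (Finset.Ico 1 n) (fun i => 1 / (logSum n * (i:ℝ))) (fun i _ => by positivity) (wts_sum hn) (fun i ρ => Dk ρ (n - i)) m _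
    (fun i hi => LqB_Dk (by omega) m hm)

lemma nrm_RK {A n : ℕ} (hn : 2 ≤ n) (hA : n < 2 ^ A) (x : XA A) : nrm x (RK n) ≤ 2 := by
  have h := logSum_ge_one hn
  have := nrm_monotone_sum x (fun j => 1 / (logSum n * ((1 + j : ℕ):ℝ))) (by
    intro i j hij
    apply one_div_le_one_div_of_le (by positivity)
    have : ((1 + i:ℕ):ℝ) ≤ (1 + j : ℕ) := by exact_mod_cast (by omega)
    gcongr) (fun j => by positivity) (n - 1) (by omega)
  have e := wts_sum hn
  rw [Finset.sum_Ico_eq_sum_range] at e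
  rw [e] at this
  unfold RK
  simp only [Finset.sum_Ico_eq_sum_range]
  simp only [add_comm 1] at this ⊢
  linarith

lemma LqB_RK {A n : ℕ} (hn : 2 ≤ n) (hA : n < 2 ^ A) (m : ℕ) (hm : 1 ≤ m) : LqB A (RK n) m 2 :=
  LqB_nrm _ _ (nrm_RK hn hA) m hm

lemma LK_Nk {n : ℕ} (hn : 2 ≤ n) (ρ : ℕ → ℝ) : LK n ρ = (logSum n)⁻¹ * Nk ρ n := by
  obtain ⟨k, rfl⟩ : ∃ k, n = k + 1 := ⟨n - 1, by omega⟩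
  unfold LK Nk
  rw [Finset.sum_range_succ, Finset.sum_Ico_eq_sum_range, mul_add, Finset.mul_sum]
  simp only [Nat.sub_self, Dk, Finset.range_zero, Finset.sum_empty, zero_div, mul_zero, add_zero, Nat.add_sub_cancel]
  apply Finset.sum_congr rfl
  intro i _
  rw [add_comm 1 i]
  push_cast
  rw [one_div, mul_inv]
  ring

lemma Hs_le_logSum {n : ℕ} (hn : 2 ≤ n) : Hs n ≤ 2 * logSum n := by
  have h := logSum_ge_one hn
  obtain ⟨k, rfl⟩ : ∃ k, n = k + 1 := ⟨n - 1, by omega⟩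
  rw [logSum_Hs] at *
  have : Hs (k+1) = Hs k + 1 / (k+1) := by unfold Hs; rw [Finset.sum_range_succ]
  have h2 : (1:ℝ) / (k+1) ≤ 1 := by
    rw [div_le_one (by positivity)]; linarith [(Nat.cast_nonneg k : (0:ℝ) ≤ k)]
  linarith

lemma cheb_ex {α : Type*} [Fintype α] (G : α → ℝ) (hG : ∀ x, 0 ≤ G x) (l : ℝ) (hl : 0 < l) :
    ex (fun x => if l ≤ G x then (1:ℝ) else 0) ≤ l⁻¹ * ex G := by
  rw [← ex_mul]; apply ex_mono
  intro x; split_ifs with h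
  · rw [inv_mul_eq_div, le_div_iff₀ hl]; linarith
  · have := hG x; positivity

lemma op_smul {A : ℕ} (κ : (ℕ → ℝ) → ℝ) (c : ℝ) (F : XA A → ℝ) (x : XA A) :
    op κ (fun t => c * F t) x = c * op κ F x := by
  unfold op; rw [← ex_mul]; congr 1; funext t; ring

lemma op_smul_left {A : ℕ} (κ : (ℕ → ℝ) → ℝ) (c : ℝ) (F : XA A → ℝ) (x : XA A) :
    op (fun ρ => c * κ ρ) F x = c * op κ F x := by
  unfold op; rw [← ex_mul]; congr 1; funext t; ring

lemma LK_weak {A n : ℕ} (hn : 2 ≤ n) (hA : n < 2 ^ A) (F : XA A → ℝ) (l : ℝ) (hl : 0 < l) :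
    ex (fun x => if l ≤ |op (LK n) F x| then (1:ℝ) else 0) ≤ 16 / l * ex (fun x => |F x|) := by
  obtain ⟨v, e, hv1, -, he, hv3⟩ := Nk_decomp n
  have hL := logSum_ge_one hn
  have hH := Hs_le_logSum hn
  have hH1 : 1 ≤ Hs n := by
    have := Hs_mono (show 1 ≤ n by omega)
    have h1 : Hs 1 = 1 := by simp [Hs]
    linarith
  set L := logSum n with hLdef
  set H := Hs n with hHdef
  set E := ex (fun x => |F x|) with hE
  have hE0 : 0 ≤ E := ex_nonneg fun x => abs_nonneg _
  have hL0 : 0 < L := by linarith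
  set c : ℝ := 2 * H / (L * l) with hc
  have hc0 : 0 ≤ c := by positivity
  have hmt := mt_weak (A := A) (fun a => v a / H) (by
    intro a; rw [abs_div, abs_of_pos (show 0 < H by linarith), div_le_one (by linarith)]; exact hv1 a)
    (fun t => c * (Wp (sg t) n * F t))
  have hF' : ex (fun t : XA A => |c * (Wp (sg t) n * F t)|) = c * E := by
    simp only [abs_mul, Wp_abs (sg_isSgn _) n, one_mul, abs_of_nonneg hc0]
    rw [ex_mul]
  rw [hF'] at hmt
  have hch := cheb_ex (fun x => |op e F x|) (fun x => abs_nonneg _) (L * l / 2) (by positivity)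
  have hL1 := L1_nrm e _ (he A hA) F
  have key : ∀ x, op (LK n) F x = L⁻¹ * (Wp (sg x) n * op (mtK A v) (fun t => Wp (sg t) n * F t) x + op e F x) := by
    intro x
    rw [← op_Wp_mtK]
    have : op (LK n) F x = op (fun ρ => L⁻¹ * (Wp ρ n * mtK A v ρ + e ρ)) F x :=
      op_congr (fun ρ hρ => by rw [LK_Nk hn, hv3 A hA ρ hρ]; rfl) F x
    rw [this, op_smul_left]
    congr 1
    unfold op; rw [← ex_add]; congr 1; funext t; ring
  have key2 : ∀ x, op (mtK A (fun a => v a / H)) (fun t => c * (Wp (sg t) n * F t)) x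
      = (2 / (L * l)) * op (mtK A v) (fun t => Wp (sg t) n * F t) x := by
    intro x
    rw [op_smul]
    have : mtK A (fun a => v a / H) = fun ρ => H⁻¹ * mtK A v ρ := by
      funext ρ; unfold mtK; rw [Finset.mul_sum]; apply Finset.sum_congr rfl; intros; ring
    rw [this, op_smul_left, hc]
    field_simp
  have hpt : ∀ x, (if l ≤ |op (LK n) F x| then (1:ℝ) else 0) ≤
      (if 1 ≤ |op (mtK A (fun a => v a / H)) (fun t => c * (Wp (sg t) n * F t)) x| then (1:ℝ) else 0)
      + (if L * l / 2 ≤ |op e F x| then (1:ℝ) else 0) := by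
    intro x
    by_cases h1 : 1 ≤ |op (mtK A (fun a => v a / H)) (fun t => c * (Wp (sg t) n * F t)) x|
    · rw [if_pos h1]; split_ifs <;> norm_num
    by_cases h2 : L * l / 2 ≤ |op e F x|
    · rw [if_pos h2]; split_ifs <;> norm_num
    rw [if_neg h1, if_neg h2, if_neg]; · norm_num
    push Not at h1 h2 ⊢
    rw [key2, abs_mul, abs_of_pos (by positivity), div_mul_eq_mul_div, div_lt_one (by positivity)] at h1
    rw [key, abs_mul, abs_of_pos (by positivity), inv_mul_lt_iff₀ hL0]
    refine (abs_add_le _ _).trans_lt ?_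
    rw [abs_mul, Wp_abs (sg_isSgn _) n, one_mul]
    linarith
  refine (ex_mono hpt).trans ?_
  rw [ex_add]
  have hb1 : 2 * (c * E) ≤ 8 / l * E := by
    rw [← mul_assoc]
    apply mul_le_mul_of_nonneg_right _ hE0
    rw [hc, le_div_iff₀ hl]
    have : 2 * (2 * H / (L * l)) * l = 4 * H / L := by field_simp; ring
    rw [this, div_le_iff₀ hL0]; linarith
  have hb2 : (L * l / 2)⁻¹ * ex (fun x => |op e F x|) ≤ 8 / l * E := by
    calc _ ≤ (L * l / 2)⁻¹ * (2 * H * E) := by gcongr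
      _ = (4 * H / L) / l * E := by field_simp; ring
      _ ≤ 8 / l * E := by
        apply mul_le_mul_of_nonneg_right _ hE0
        apply div_le_div_of_nonneg_right _ hl.le
        rw [div_le_iff₀ hL0]; linarith
  have : 16 / l * E = 8 / l * E + 8 / l * E := by ring
  linarith

abbrev YA (d A : ℕ) := Fin d → XA A

def idK (A : ℕ) (ρ : ℕ → ℝ) : ℝ := Dk ρ (2 ^ A)

def Tm {d A : ℕ} (K : Fin d → (ℕ → ℝ) → ℝ) (F : YA d A → ℝ) (y : YA d A) : ℝ :=
  ex (fun t : YA d A => (∏ i, K i (sg (y i) * sg (t i))) * F t)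

def opi {d A : ℕ} (i : Fin d) (κ : (ℕ → ℝ) → ℝ) (F : YA d A → ℝ) (y : YA d A) : ℝ :=
  op κ (fun s => F (Function.update y i s)) (y i)

lemma ex_prod {α β : Type*} [Fintype α] [Fintype β] (F : α → β → ℝ) :
    ex (fun p : α × β => F p.1 p.2) = ex (fun x => ex (fun y => F x y)) := by
  unfold ex
  rw [Fintype.sum_prod_type, Fintype.card_prod, ← Finset.mul_sum]
  push_cast; rw [mul_inv]; ring

def swapE {d A : ℕ} (i : Fin d) : YA d A × XA A ≃ YA d A × XA A :=
  Function.Involutive.toPerm (fun p => (Function.update p.1 i p.2, p.1 i)) (by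
    rintro ⟨y, s⟩; simp)

lemma ex_update {d A : ℕ} (i : Fin d) (G : YA d A → ℝ) :
    ex (fun y : YA d A => ex (fun s : XA A => G (Function.update y i s))) = ex G := by
  rw [← ex_prod (fun (y : YA d A) (s : XA A) => G (Function.update y i s))]
  have h := ex_equiv (swapE (A := A) i) (fun p => G p.1)
  have h2 := ex_prod (fun (y : YA d A) (_ : XA A) => G y)
  simp only [ex_const] at h2
  rw [← h2, ← h]; rfl

lemma opi_update {d A : ℕ} (i : Fin d) (κ : (ℕ → ℝ) → ℝ) (F : YA d A → ℝ) (y : YA d A) (s : XA A) :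
    opi i κ F (Function.update y i s) = op κ (fun u => F (Function.update y i u)) s := by
  unfold opi; simp

lemma opi_Lq {d A m : ℕ} (i : Fin d) (κ : (ℕ → ℝ) → ℝ) (C : ℝ) (h : LqB A κ m C) (F : YA d A → ℝ) :
    ex (fun y => (opi i κ F y) ^ (2 * m)) ≤ C ^ (2 * m) * ex (fun y => F y ^ (2 * m)) := by
  rw [← ex_update i, ← ex_update i (fun y => F y ^ (2 * m)), ← ex_mul]
  apply ex_mono; intro y
  simp only [opi_update]
  exact h _

lemma opi_weak {d A n : ℕ} (i : Fin d) (hn : 2 ≤ n) (hA : n < 2 ^ A) (F : YA d A → ℝ) (l : ℝ) (hl : 0 < l) :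
    ex (fun y => if l ≤ |opi i (LK n) F y| then (1:ℝ) else 0) ≤ 16 / l * ex (fun y => |F y|) := by
  rw [← ex_update i, ← ex_update i (fun y => |F y|), ← ex_mul]
  apply ex_mono; intro y
  simp only [opi_update]
  exact LK_weak hn hA _ l hl

lemma opi_Tm {d A : ℕ} (i : Fin d) (κ : (ℕ → ℝ) → ℝ) (K : Fin d → (ℕ → ℝ) → ℝ) (hK : K i = idK A)
    (F : YA d A → ℝ) (y : YA d A) :
    opi i κ (Tm K F) y = Tm (Function.update K i κ) F y := by
  unfold opi Tm op
  simp only [← ex_mul]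
  rw [ex_comm]
  congr 1; funext t
  have h1 : ∀ s : XA A, ∏ j, K j (sg (Function.update y i s j) * sg (t j))
      = idK A (sg s * sg (t i)) * ∏ j ∈ Finset.univ.erase i, K j (sg (y j) * sg (t j)) := by
    intro s
    rw [← Finset.mul_prod_erase _ _ (Finset.mem_univ i)]
    simp only [Function.update_self, hK]
    congr 1
    apply Finset.prod_congr rfl
    intro j hj
    rw [Function.update_of_ne (Finset.ne_of_mem_erase hj)]
  have h2 : ∏ j, Function.update K i κ j (sg (y j) * sg (t j))
      = κ (sg (y i) * sg (t i)) * ∏ j ∈ Finset.univ.erase i, K j (sg (y j) * sg (t j)) := by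
    rw [← Finset.mul_prod_erase _ _ (Finset.mem_univ i)]
    simp only [Function.update_self]
    congr 1
    apply Finset.prod_congr rfl
    intro j hj
    rw [Function.update_of_ne (Finset.ne_of_mem_erase hj)]
  have h3 := op_id (fun s => κ (sg (y i) * sg s)) (t i)
  unfold op at h3
  simp only [h1, h2]
  rw [← h3, mul_assoc, ← ex_mul_right]
  congr 1; funext s
  rw [mul_comm (sg (t i))]; unfold idK; ring

lemma Tm_id {d A : ℕ} (F : YA d A → ℝ) (y : YA d A) : Tm (fun _ => idK A) F y = F y := by
  unfold Tm idK
  simp only [Dk_full, Finset.prod_ite_zero]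
  have : ∀ t : YA d A, (∀ i ∈ Finset.univ, t i = y i) ↔ t = y := by
    intro t; simp [funext_iff]
  simp only [this]
  unfold ex
  simp

lemma Tm_split {d A : ℕ} (i : Fin d) (K : Fin d → (ℕ → ℝ) → ℝ) (F : YA d A → ℝ) (y : YA d A) :
    Tm K F y = opi i (K i) (Tm (Function.update K i (idK A)) F) y := by
  rw [opi_Tm i (K i) _ (by simp)]; simp

lemma Tm_Lq {d A m : ℕ} (K : Fin d → (ℕ → ℝ) → ℝ) (C : Fin d → ℝ) (hC : ∀ i, LqB A (K i) m (C i))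
    (F : YA d A → ℝ) :
    ex (fun y => (Tm K F y) ^ (2 * m)) ≤ (∏ i, C i) ^ (2 * m) * ex (fun y => F y ^ (2 * m)) := by
  have h : ∀ s : Finset (Fin d), ex (fun y => (Tm (fun i => if i ∈ s then K i else idK A) F y) ^ (2 * m))
      ≤ (∏ i ∈ s, C i) ^ (2 * m) * ex (fun y => F y ^ (2 * m)) := by
    intro s
    induction s using Finset.induction_on with
    | empty => simp [Tm_id]
    | insert a s ha ih =>
      have e : (fun i => if i ∈ insert a s then K i else idK A)
          = Function.update (fun i => if i ∈ s then K i else idK A) a (K a) := by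
        funext i
        by_cases hi : i = a
        · subst hi; simp
        · simp [hi]
      rw [e]
      simp only [← opi_Tm (A := A) a (K a) (fun i => if i ∈ s then K i else idK A) (by simp [ha])]
      refine (opi_Lq a (K a) (C a) (hC a) _).trans ?_
      rw [Finset.prod_insert ha, mul_pow, mul_assoc]
      exact mul_le_mul_of_nonneg_left ih ((even_two_mul m).pow_nonneg _)
  have := h Finset.univ
  simpa using this

lemma LqB_id (A m : ℕ) : LqB A (idK A) m 1 := by
  intro F
  have : ∀ x, op (idK A) F x = F x := fun x => op_id F x
  simp [this]

lemma Tm_adj {d A : ℕ} (K : Fin d → (ℕ → ℝ) → ℝ) (F G : YA d A → ℝ) :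
    ex (fun y => G y * Tm K F y) = ex (fun y => F y * Tm K G y) := by
  unfold Tm
  simp only [← ex_mul]
  rw [ex_comm]
  congr 1; funext t; congr 1; funext y
  simp only [mul_comm (sg (y _))]
  ring

def dig (A : ℕ) (x : ℝ) : XA A := fun k => decide (¬ (Int.fract ((2:ℝ) ^ k.1 * x) < 1/2))

def dg {d : ℕ} (A : ℕ) (x : Fin d → ℝ) : YA d A := fun i => dig A (x i)

lemma sg_dig {A k : ℕ} (hk : k < A) (x : ℝ) : sg (dig A x) k = rademacher k x := by
  unfold sg dig rademacher r0
  rw [dif_pos hk]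
  by_cases h : Int.fract ((2:ℝ) ^ k * x) < 1 / 2
  · simp only [h]; simp
  · simp only [h]; simp

lemma walsh_eq {A j : ℕ} (hj : j < 2 ^ A) (x : ℝ) : walsh j x = Wp (sg (dig A x)) j := by
  have : walsh j x = Wp (fun k => rademacher k x) j := rfl
  rw [this]
  exact Wp_congr (fun k hk => (sg_dig hk x).symm) hj

lemma cell_onedim (m : ℕ → Bool) (A : ℕ) : ∃ z : ℤ, ∀ x : ℝ,
    (x ∈ Set.Ico (0:ℝ) 1 ∧ ∀ k < A, decide (¬ (Int.fract ((2:ℝ) ^ k * x) < 1/2)) = m k) ↔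
      ((z:ℝ) ≤ 2 ^ A * x ∧ 2 ^ A * x < z + 1) := by
  induction A with
  | zero => exact ⟨0, fun x => by simp⟩
  | succ A ih =>
    obtain ⟨z, hz⟩ := ih
    refine ⟨if m A then 2 * z + 1 else 2 * z, fun x => ?_⟩
    have h1 : (x ∈ Set.Ico (0:ℝ) 1 ∧ ∀ k < A + 1, decide (¬ (Int.fract ((2:ℝ) ^ k * x) < 1/2)) = m k) ↔
      ((z:ℝ) ≤ 2 ^ A * x ∧ 2 ^ A * x < z + 1) ∧ decide (¬ (Int.fract ((2:ℝ) ^ A * x) < 1/2)) = m A := by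
      rw [← hz, and_assoc]
      apply and_congr_right; intro _
      constructor
      · intro h; exact ⟨fun k hk => h k (by omega), h A (by omega)⟩
      · rintro ⟨h, h'⟩ k hk
        rcases Nat.lt_succ_iff_lt_or_eq.1 hk with hk | rfl
        · exact h k hk
        · exact h'
    rw [h1]
    have hfr : ((z:ℝ) ≤ 2 ^ A * x ∧ 2 ^ A * x < z + 1) → Int.fract ((2:ℝ) ^ A * x) = 2 ^ A * x - z := by
      intro h
      have : ⌊(2:ℝ) ^ A * x⌋ = z := Int.floor_eq_iff.2 h
      rw [Int.fract, this]
    have hp : (2:ℝ) ^ (A+1) * x = 2 * (2 ^ A * x) := by rw [pow_succ]; ring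
    rw [hp]
    set u := (2:ℝ) ^ A * x
    constructor
    · rintro ⟨h, h'⟩
      rw [hfr h] at h'
      cases hm : m A
      · rw [hm] at h'; simp at h'; simp; constructor <;> linarith
      · rw [hm] at h'; simp at h'; simp; constructor <;> linarith
    · intro h
      have hh : (z:ℝ) ≤ u ∧ u < z + 1 := by
        cases hm : m A
        · rw [hm] at h; simp at h; constructor <;> linarith
        · rw [hm] at h; simp at h; constructor <;> linarith
      refine ⟨hh, ?_⟩
      rw [hfr hh]
      cases hm : m A
      · rw [hm] at h; simp at h; simp; linarith
      · rw [hm] at h; simp at h; simp; linarith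

lemma cell_onedim' {A : ℕ} (m : XA A) : ∃ z : ℤ, {x : ℝ | x ∈ Set.Ico (0:ℝ) 1 ∧ dig A x = m} =
    Set.Ico ((z:ℝ) / 2 ^ A) ((z + 1) / 2 ^ A) := by
  obtain ⟨z, hz⟩ := cell_onedim (fun k => if h : k < A then m ⟨k, h⟩ else false) A
  refine ⟨z, ?_⟩
  ext x
  rw [Set.mem_ofPred_eq, Set.mem_Ico (a := (z:ℝ) / 2 ^ A), div_le_iff₀ (by positivity), lt_div_iff₀ (by positivity), mul_comm x, ← hz x]
  apply and_congr_right; intro _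
  constructor
  · rintro rfl k hk
    simp only [hk, dite_true]; rfl
  · intro h; funext k
    have := h k.1 k.2
    simp only [k.2, dite_true] at this
    exact this

lemma dig_dist {A : ℕ} {x y : ℝ} (hx : x ∈ Set.Ico (0:ℝ) 1) (hy : y ∈ Set.Ico (0:ℝ) 1) (h : dig A x = dig A y) :
    |x - y| < 1 / 2 ^ A := by
  obtain ⟨z, hz⟩ := cell_onedim' (dig A y)
  have h1 : x ∈ {x : ℝ | x ∈ Set.Ico (0:ℝ) 1 ∧ dig A x = dig A y} := ⟨hx, h⟩
  have h2 : y ∈ {x : ℝ | x ∈ Set.Ico (0:ℝ) 1 ∧ dig A x = dig A y} := ⟨hy, rfl⟩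
  rw [hz, Set.mem_Ico, add_div] at h1 h2
  rw [abs_lt]; constructor <;> linarith

lemma dig_meas (A : ℕ) : Measurable (dig A) := by
  refine measurable_pi_lambda _ (fun k => ?_)
  apply measurable_to_bool
  have : Measurable fun x : ℝ => Int.fract ((2:ℝ) ^ k.1 * x) := measurable_fract.comp (measurable_const_mul _)
  have h2 := (measurableSet_lt this (measurable_const (a := (1/2:ℝ)))).compl
  convert h2 using 1
  ext x
  simp [dig]

lemma dg_meas {d : ℕ} (A : ℕ) : Measurable (dg (d := d) A) :=
  measurable_pi_lambda _ (fun i => (dig_meas A).comp (measurable_pi_apply i))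

lemma cube_meas (d : ℕ) : MeasurableSet (unitCube d) :=
  MeasurableSet.univ_pi fun _ => measurableSet_Ico

instance cube_prob (d : ℕ) : IsProbabilityMeasure (cubeMeasure d) := by
  constructor
  simp [cubeMeasure, unitCube, Real.volume_pi_Ico]

lemma cell_vol {d A : ℕ} (m : YA d A) : (cubeMeasure d).real ((dg A) ⁻¹' {m}) = ((2 ^ A : ℝ) ^ d)⁻¹ := by
  have hset : (dg A) ⁻¹' {m} ∩ unitCube d = Set.univ.pi fun i => {x : ℝ | x ∈ Set.Ico (0:ℝ) 1 ∧ dig A x = m i} := by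
    ext x
    simp only [unitCube, Set.mem_inter_iff, Set.mem_preimage, Set.mem_singleton_iff, Set.mem_pi, Set.mem_univ, true_imp_iff, Set.mem_ofPred_eq, funext_iff (f := dg A x)]
    unfold dg
    constructor
    · rintro ⟨h1, h2⟩ i; exact ⟨h2 i, h1 i⟩
    · intro h; exact ⟨fun i => (h i).2, fun i => (h i).1⟩
  rw [measureReal_def, cubeMeasure, Measure.restrict_apply (dg_meas A (measurableSet_singleton m)), hset, volume_pi_pi]
  have : ∀ i, volume {x : ℝ | x ∈ Set.Ico (0:ℝ) 1 ∧ dig A x = m i} = ENNReal.ofReal ((2 ^ A)⁻¹) := by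
    intro i
    obtain ⟨z, hz⟩ := cell_onedim' (m i)
    rw [hz, Real.volume_Ico]; congr 1; field_simp; ring
  simp only [this]
  rw [ENNReal.toReal_prod]
  simp

def disc {d : ℕ} (A : ℕ) (f : (Fin d → ℝ) → ℝ) (m : YA d A) : ℝ :=
  (2 ^ A : ℝ) ^ d * ∫ x in (dg A) ⁻¹' {m}, f x ∂(cubeMeasure d)

lemma card_YA (d A : ℕ) : (Fintype.card (YA d A) : ℝ) = (2 ^ A : ℝ) ^ d := by simp

lemma int_disc {d A : ℕ} (f : (Fin d → ℝ) → ℝ) (hf : Integrable f (cubeMeasure d)) (G : YA d A → ℝ) :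
    ∫ x, f x * G (dg A x) ∂(cubeMeasure d) = ex (fun m => disc A f m * G m) := by
  have h1 : ∀ x, f x * G (dg A x) = ∑ m, G m * ((dg A) ⁻¹' {m}).indicator f x := by
    intro x
    rw [Finset.sum_eq_single (dg A x)]
    · simp [Set.indicator, mul_comm]
    · intro b _ hb
      simp [Set.indicator, hb.symm]
    · simp
  simp only [h1]
  have hm : ∀ m : YA d A, MeasurableSet ((dg A) ⁻¹' {m}) := fun m => dg_meas A (measurableSet_singleton m)
  rw [integral_finsetSum]
  · unfold ex disc
    rw [card_YA, Finset.mul_sum]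
    apply Finset.sum_congr rfl
    intro m _
    rw [integral_const_mul, integral_indicator (hm m)]
    field_simp
  · intro m _
    exact (hf.indicator (hm m)).const_mul _

lemma disc_one {d A : ℕ} (m : YA d A) : disc A (fun _ => (1:ℝ)) m = 1 := by
  unfold disc
  rw [setIntegral_const, cell_vol]
  simp

lemma int_dg {d A : ℕ} (G : YA d A → ℝ) : ∫ x, G (dg A x) ∂(cubeMeasure d) = ex G := by
  have := int_disc (d := d) (A := A) (fun _ => 1) (integrable_const 1) G
  simpa [disc_one] using this

lemma G_dg_integrable {d A : ℕ} (G : YA d A → ℝ) : Integrable (fun x => G (dg A x)) (cubeMeasure d) := by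
  refine Integrable.of_bound ((measurable_of_finite G).comp (dg_meas A)).aestronglyMeasurable (∑ m, |G m|) ?_
  refine Eventually.of_forall fun x => ?_
  exact Finset.single_le_sum (f := fun m => |G m|) (fun m _ => abs_nonneg _) (Finset.mem_univ (dg A x))

open Classical in
lemma meas_dg {d A : ℕ} (P : YA d A → Prop) : (cubeMeasure d).real {x | P (dg A x)} = ex (fun m => if P m then (1:ℝ) else 0) := by
  rw [← int_dg (d := d) (fun m => if P m then (1:ℝ) else 0)]
  have hm : MeasurableSet {x : Fin d → ℝ | P (dg A x)} := dg_meas A (Set.toFinite {m | P m}).measurableSet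
  rw [← integral_indicator_one hm]
  congr 1

lemma walshCoef_eq {d A : ℕ} (f : (Fin d → ℝ) → ℝ) (hf : Integrable f (cubeMeasure d)) (j : Fin d → ℕ) (hj : ∀ i, j i < 2 ^ A) :
    walshCoef f j = ex (fun m : YA d A => disc A f m * ∏ i, Wp (sg (m i)) (j i)) := by
  rw [← int_disc f hf]
  unfold walshCoef
  congr 1; funext x; congr 1
  apply Finset.prod_congr rfl; intro i _
  exact walsh_eq (hj i) _

lemma rect_eq {d A : ℕ} (f : (Fin d → ℝ) → ℝ) (hf : Integrable f (cubeMeasure d)) (N : Fin d → ℕ) (hN : ∀ i, N i ≤ 2 ^ A) (x : Fin d → ℝ) :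
    rectPartialSum f N x = ex (fun t : YA d A => (∏ i, Dk (sg (dg A x i) * sg (t i)) (N i)) * disc A f t) := by
  unfold rectPartialSum Dk
  simp only [Finset.prod_univ_sum, Finset.sum_mul]
  rw [ex_sum]
  apply Finset.sum_congr rfl
  intro j hj
  have hj' : ∀ i, j i < 2 ^ A := fun i => by
    have := Fintype.mem_piFinset.1 hj i
    have h2 := hN i
    simp at this; omega
  rw [walshCoef_eq f hf j hj', ← ex_mul_right]
  congr 1; funext t
  simp only [Wp_mul', Finset.prod_mul_distrib]
  have : ∏ i, walsh (j i) (x i) = ∏ i, Wp (sg (dg A x i)) (j i) :=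
    Finset.prod_congr rfl fun i _ => walsh_eq (hj' i) _
  rw [this]; ring

def MK {d : ℕ} (B : Finset (Fin d)) (n : Fin d → ℕ) (j : Fin d) : (ℕ → ℝ) → ℝ :=
  if j ∈ B then LK (n j) else RK (n j)

lemma MK_eq {d : ℕ} (B : Finset (Fin d)) (n : Fin d → ℕ) (j : Fin d) (ρ : ℕ → ℝ) :
    MK B n j ρ = ∑ i ∈ Finset.Ico 1 (n j), (1 / (logSum (n j) * (i:ℝ))) * Dk ρ (if j ∈ B then n j - i else i) := by
  unfold MK; split_ifs <;> rfl

lemma mixed_eq {d A : ℕ} (B : Finset (Fin d)) (f : (Fin d → ℝ) → ℝ) (hf : Integrable f (cubeMeasure d)) (n : Fin d → ℕ)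
    (hn : ∀ i, n i ≤ 2 ^ A) (x : Fin d → ℝ) :
    mixedLogMean B f n x = Tm (MK B n) (disc A f) (dg A x) := by
  unfold mixedLogMean Tm
  simp only [MK_eq, Finset.prod_univ_sum, Finset.sum_mul]
  rw [ex_sum, Finset.mul_sum]
  apply Finset.sum_congr rfl
  intro i hi
  rw [rect_eq (A := A) f hf _ (by
    intro j
    have := Fintype.mem_piFinset.1 hi j
    have h2 := hn j
    simp at this; split_ifs <;> omega)]
  simp only [Finset.prod_mul_distrib, mul_assoc]
  rw [ex_mul, ← mul_div_assoc, mul_comm _ (ex _), mul_comm _ (ex _), mul_div_assoc]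
  congr 1
  simp only [one_div, mul_inv, Finset.prod_mul_distrib, Finset.prod_inv_distrib]
  rw [div_eq_mul_inv]

lemma trunc_small {d : ℕ} (f φ : (Fin d → ℝ) → ℝ) (hf : Measurable f) (hφ : Integrable φ (cubeMeasure d)) :
    Tendsto (fun N : ℕ => ∫ x, (if (N:ℝ) < |f x| then φ x else 0) ∂(cubeMeasure d)) atTop (nhds 0) := by
  have h := tendsto_integral_of_dominated_convergence (μ := cubeMeasure d)
    (F := fun (N : ℕ) x => if (N:ℝ) < |f x| then φ x else 0) (f := fun _ => 0) (fun x => ‖φ x‖)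
    (fun N => by
      have hm : MeasurableSet {x | (N:ℝ) < |f x|} := measurableSet_lt measurable_const hf.abs
      exact (hφ.indicator hm).aestronglyMeasurable)
    hφ.norm
    (fun N => Eventually.of_forall fun x => by
      split_ifs
      · exact le_rfl
      · simp)
    (Eventually.of_forall fun x => by
      apply tendsto_const_nhds.congr'
      obtain ⟨N, hN⟩ := exists_nat_ge |f x|
      filter_upwards [eventually_ge_atTop N] with n hn
      have : (N:ℝ) ≤ n := by exact_mod_cast hn
      rw [if_neg (by linarith)])
  simpa using h

/-- The auxiliary weights. -/
def Pw (D : ℝ) (k r : ℕ) : ℝ := Real.exp 1 * (D * (r:ℝ) ^ k)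

def Vw (D : ℝ) (k r : ℕ) (β : ℝ) : ℝ := Real.exp r * Pw D k r * (β / Pw D k r) ^ (2 * r)

lemma Pw_pos {D : ℝ} (hD : 0 < D) (k : ℕ) {r : ℕ} (hr : 1 ≤ r) : 0 < Pw D k r := by
  have : (0:ℝ) < r := by exact_mod_cast hr
  unfold Pw; positivity

lemma Vw_nonneg {D : ℝ} (hD : 0 < D) (k r : ℕ) (β : ℝ) : 0 ≤ Vw D k r β := by
  unfold Vw
  have h1 : 0 ≤ Pw D k r := by unfold Pw; positivity
  have := (even_two_mul r).pow_nonneg (β / Pw D k r)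
  positivity

lemma young_pt {D : ℝ} (hD : 0 < D) (k R : ℕ) (hR : 1 ≤ R) (a β : ℝ) (ha : Real.exp R ≤ a) :
    ∃ r, R ≤ r ∧ a * |β| ≤ Real.exp 1 * D * 2 ^ k * (a * (1 + Real.log (1 + a) ^ k)) + Vw D k r β := by
  have ha0 : 0 < a := lt_of_lt_of_le (Real.exp_pos _) ha
  set u := Real.log (1 + a) with hu
  have hu1 : (R:ℝ) ≤ u := by
    rw [hu, Real.le_log_iff_exp_le (by linarith)]; linarith
  have hR' : (1:ℝ) ≤ R := by exact_mod_cast hR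
  set r := ⌈u⌉₊ with hr
  have hr1 : u ≤ r := Nat.le_ceil u
  have hr2 : (r:ℝ) < u + 1 := Nat.ceil_lt_add_one (by linarith)
  have hRr : R ≤ r := by exact_mod_cast hu1.trans hr1
  refine ⟨r, hRr, ?_⟩
  have hP := Pw_pos hD k (show 1 ≤ r by omega)
  have hae : a ≤ Real.exp r := by
    have : Real.log (1 + a) ≤ r := hr1
    rw [Real.log_le_iff_le_exp (by linarith)] at this; linarith
  set x := |β| / Pw D k r with hx
  have hx0 : 0 ≤ x := by positivity
  have hx1 : x ≤ 1 + x ^ (2 * r) := by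
    rcases le_total x 1 with h | h
    · have : 0 ≤ x ^ (2 * r) := by positivity
      linarith
    · have := le_self_pow₀ h (show 2 * r ≠ 0 by omega)
      linarith
  have hxe : x ^ (2 * r) = (β / Pw D k r) ^ (2 * r) := by
    rw [← (even_two_mul r).pow_abs (β / Pw D k r), abs_div, abs_of_pos hP]
  have hβ : |β| = Pw D k r * x := by rw [hx]; field_simp
  have hPr : Pw D k r ≤ Real.exp 1 * D * 2 ^ k * (1 + u ^ k) := by
    have h1 : (r:ℝ) ^ k ≤ 2 ^ k * (1 + u ^ k) := by
      calc (r:ℝ) ^ k ≤ (2 * u) ^ k := by gcongr; linarith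
        _ = 2 ^ k * u ^ k := mul_pow _ _ _
        _ ≤ _ := by gcongr; linarith
    unfold Pw
    calc _ ≤ Real.exp 1 * (D * (2 ^ k * (1 + u ^ k))) := by gcongr
      _ = _ := by ring
  have hp0 : 0 ≤ x ^ (2 * r) := by positivity
  calc a * |β| = a * Pw D k r * x := by rw [hβ]; ring
    _ ≤ a * Pw D k r * (1 + x ^ (2 * r)) := by gcongr
    _ = a * Pw D k r + a * Pw D k r * x ^ (2 * r) := by ring
    _ ≤ a * (Real.exp 1 * D * 2 ^ k * (1 + u ^ k)) + Real.exp r * Pw D k r * x ^ (2 * r) := by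
        gcongr
    _ = _ := by rw [hxe]; unfold Vw; ring

lemma ex_Vw {α : Type*} [Fintype α] {D : ℝ} (hD : 0 < D) (k r : ℕ) (hr : 1 ≤ r) (b : α → ℝ)
    (hb : ex (fun y => b y ^ (2 * r)) ≤ (D * (r:ℝ) ^ k) ^ (2 * r)) :
    ex (fun y => Vw D k r (b y)) ≤ Real.exp 1 * D * ((r:ℝ) ^ k * (Real.exp (-1)) ^ r) := by
  have hP := Pw_pos hD k hr
  have hr0 : (0:ℝ) < r := by exact_mod_cast hr
  have e1 : ∀ y, Vw D k r (b y) = (Real.exp r * Pw D k r / (Pw D k r) ^ (2 * r)) * b y ^ (2 * r) := by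
    intro y; unfold Vw; rw [div_pow]; ring
  simp only [e1]
  rw [ex_mul]
  calc _ ≤ (Real.exp r * Pw D k r / (Pw D k r) ^ (2 * r)) * (D * (r:ℝ) ^ k) ^ (2 * r) := by gcongr
    _ = Real.exp r * Pw D k r / (Real.exp 1) ^ (2 * r) := by
        have : (Pw D k r) ^ (2 * r) = (Real.exp 1) ^ (2 * r) * (D * (r:ℝ) ^ k) ^ (2 * r) := by
          unfold Pw; rw [mul_pow]
        rw [this]
        have h0 : (D * (r:ℝ) ^ k) ^ (2 * r) ≠ 0 := by positivity
        field_simp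
    _ = _ := by
        have h1 : Real.exp r = Real.exp 1 ^ r := by rw [← Real.exp_nat_mul]; simp
        have h2 : (Real.exp 1) ^ (2 * r) = Real.exp 1 ^ r * Real.exp 1 ^ r := by rw [two_mul, pow_add]
        rw [h1, h2, Real.exp_neg, inv_pow]; unfold Pw
        field_simp
    _ ≤ _ := le_rfl

lemma summ_w (k : ℕ) : Summable (fun r : ℕ => (r:ℝ) ^ k * (Real.exp (-1)) ^ r) := by
  apply summable_pow_mul_geometric_of_norm_lt_one
  rw [Real.norm_eq_abs, abs_of_pos (Real.exp_pos _), Real.exp_lt_one_iff]; norm_num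

def hiP {d : ℕ} (M : ℝ) (f : (Fin d → ℝ) → ℝ) (x : Fin d → ℝ) : ℝ := if M < |f x| then f x else 0

lemma hiP_int {d : ℕ} (M : ℝ) (f : (Fin d → ℝ) → ℝ) (hf : Measurable f) (hfi : Integrable f (cubeMeasure d)) :
    Integrable (hiP M f) (cubeMeasure d) :=
  hfi.indicator (s := {x | M < |f x|}) (measurableSet_lt measurable_const hf.abs)

lemma h_analysis {d : ℕ} (f : (Fin d → ℝ) → ℝ) (hf : Measurable f) (hfi : Integrable f (cubeMeasure d)) (k : ℕ)
    (hfl : Integrable (fun x => |f x| * Real.log (1 + |f x|) ^ k) (cubeMeasure d)) (D : ℝ) (hD : 0 < D)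
    (η : ℝ) (hη : 0 < η) :
    ∃ M0 : ℕ, ∀ M : ℕ, M0 ≤ M → ∀ (A : ℕ) (b : YA d A → ℝ),
      (∀ r : ℕ, 1 ≤ r → ex (fun y => b y ^ (2 * r)) ≤ (D * (r:ℝ) ^ k) ^ (2 * r)) →
      ∫ x, hiP M f x * b (dg A x) ∂(cubeMeasure d) ≤ η := by
  set w : ℕ → ℝ := fun r => Real.exp 1 * D * ((r:ℝ) ^ k * (Real.exp (-1)) ^ r) with hw
  have hws : Summable w := (summ_w k).mul_left _
  have ht := tendsto_sum_nat_add w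
  obtain ⟨R, hR1, hR⟩ := ((ht.eventually (gt_mem_nhds (show 0 < η / 2 by linarith))).and (eventually_ge_atTop 1)).exists
  set φ : (Fin d → ℝ) → ℝ := fun x => Real.exp 1 * D * 2 ^ k * (|f x| * (1 + Real.log (1 + |f x|) ^ k)) with hφ
  have hφi : Integrable φ (cubeMeasure d) := by
    refine Integrable.const_mul ?_ _
    simp only [mul_add, mul_one]
    exact hfi.abs.add hfl
  have hφ0 : ∀ x, 0 ≤ φ x := by
    intro x
    have : 0 ≤ Real.log (1 + |f x|) := Real.log_nonneg (by linarith [abs_nonneg (f x)])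
    simp only [hφ]; positivity
  have hU := trunc_small f φ hf hφi
  obtain ⟨M1, hM1⟩ := eventually_atTop.1 (hU.eventually (gt_mem_nhds (show 0 < η / 2 by linarith)))
  obtain ⟨M2, hM2⟩ := exists_nat_ge (Real.exp R)
  refine ⟨max M1 M2, fun M hM A b hb => ?_⟩
  have hMU := hM1 M (le_trans (le_max_left _ _) hM)
  have hMe : Real.exp R ≤ M := hM2.trans (by exact_mod_cast le_trans (le_max_right _ _) hM)
  have hexV : ∀ j, ex (fun y => Vw D k (j + R) (b y)) ≤ w (j + R) := fun j =>
    ex_Vw hD k (j + R) (by omega) b (hb (j + R) (by omega))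
  have hwsR : Summable (fun j => w (j + R)) := (summable_nat_add_iff R).2 hws
  have hVs : ∀ y, Summable (fun j => Vw D k (j + R) (b y)) := by
    intro y
    refine Summable.of_nonneg_of_le (fun j => Vw_nonneg hD k _ _) (fun j => ?_) (hwsR.mul_left (Fintype.card (YA d A) : ℝ))
    have h1 := hexV j
    unfold ex at h1
    have hc : (0:ℝ) < Fintype.card (YA d A) := by exact_mod_cast Fintype.card_pos
    rw [inv_mul_le_iff₀ hc] at h1
    exact le_trans (Finset.single_le_sum (f := fun y => Vw D k (j + R) (b y)) (fun _ _ => Vw_nonneg hD k _ _) (Finset.mem_univ y)) h1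
  set V : YA d A → ℝ := fun y => ∑' j, Vw D k (j + R) (b y) with hV
  have hV0 : ∀ y, 0 ≤ V y := fun y => tsum_nonneg fun j => Vw_nonneg hD k _ _
  have hexVs : ex V ≤ η / 2 := by
    have e : ex V = ∑' j, ex (fun y => Vw D k (j + R) (b y)) := by
      unfold ex
      rw [tsum_mul_left, Summable.tsum_finsetSum (fun y _ => hVs y)]
    rw [e]
    refine le_trans (Summable.tsum_le_tsum hexV ?_ hwsR) hR1.le
    exact Summable.of_nonneg_of_le (fun j => ex_nonneg fun y => Vw_nonneg hD k _ _) hexV hwsR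
  have hpt : ∀ x, hiP M f x * b (dg A x) ≤ (if (M:ℝ) < |f x| then φ x else 0) + V (dg A x) := by
    intro x
    unfold hiP
    by_cases h : (M:ℝ) < |f x|
    · rw [if_pos h, if_pos h]
      obtain ⟨r, hr, hr2⟩ := young_pt hD k R hR (|f x|) (b (dg A x)) (by linarith)
      have h3 : Vw D k r (b (dg A x)) ≤ V (dg A x) := by
        have := (hVs (dg A x)).le_tsum (r - R) (fun j _ => Vw_nonneg hD k _ _)
        rwa [Nat.sub_add_cancel hr] at this
      have h4 : f x * b (dg A x) ≤ |f x| * |b (dg A x)| := by rw [← abs_mul]; exact le_abs_self _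
      simp only [hφ]; linarith
    · rw [if_neg h, if_neg h, zero_mul, zero_add]; exact hV0 _
  have hi1 : Integrable (fun x => if (M:ℝ) < |f x| then φ x else 0) (cubeMeasure d) :=
    hφi.indicator (s := {x | (M:ℝ) < |f x|}) (measurableSet_lt measurable_const hf.abs)
  have hi2 : Integrable (fun x => hiP M f x * b (dg A x)) (cubeMeasure d) := by
    refine (hiP_int M f hf hfi).mul_bdd (c := ∑ m, |b m|) ((measurable_of_finite b).comp (dg_meas A)).aestronglyMeasurable ?_
    refine Eventually.of_forall fun x => ?_
    exact Finset.single_le_sum (f := fun m => |b m|) (fun m _ => abs_nonneg _) (Finset.mem_univ (dg A x))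
  calc _ ≤ ∫ x, ((if (M:ℝ) < |f x| then φ x else 0) + V (dg A x)) ∂(cubeMeasure d) :=
        integral_mono hi2 (hi1.add (G_dg_integrable V)) hpt
    _ = (∫ x, (if (M:ℝ) < |f x| then φ x else 0) ∂(cubeMeasure d)) + ex V := by
        rw [integral_add hi1 (G_dg_integrable V), int_dg]
    _ ≤ η := by linarith

lemma LqB_mono {A m : ℕ} {κ : (ℕ → ℝ) → ℝ} {C C' : ℝ} (h : LqB A κ m C) (h0 : 0 ≤ C) (hC : C ≤ C') : LqB A κ m C' := by
  intro F
  refine (h F).trans ?_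
  have : 0 ≤ ex (fun x => F x ^ (2 * m)) := ex_nonneg fun x => (even_two_mul m).pow_nonneg _
  gcongr

lemma h_weak {d : ℕ} (B : Finset (Fin d)) (hB : B.Nonempty) (f : (Fin d → ℝ) → ℝ) (hf : Measurable f) (hfi : Integrable f (cubeMeasure d))
    (hfl : Integrable (fun x => |f x| * Real.log (1 + |f x|) ^ (B.card - 1)) (cubeMeasure d))
    (η : ℝ) (hη : 0 < η) (l : ℝ) (hl : 0 < l) :
    ∃ M0 : ℕ, ∀ M : ℕ, M0 ≤ M → ∀ n : Fin d → ℕ, (∀ j, 2 ≤ n j) →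
      (cubeMeasure d).real {x | l ≤ |mixedLogMean B (hiP M f) n x|} ≤ η := by
  set D : ℝ := 2 ^ d * 12 ^ (B.card - 1) with hDdef
  have hD : 0 < D := by positivity
  obtain ⟨M0, hM0⟩ := h_analysis f hf hfi (B.card - 1) hfl D hD (l * η / 16) (by positivity)
  refine ⟨M0, fun M hM n hn => ?_⟩
  obtain ⟨i0, hi0⟩ := hB
  set A := ∑ j, n j with hA
  have hnA : ∀ j, n j < 2 ^ A := fun j =>
    lt_of_le_of_lt (Finset.single_le_sum (f := n) (fun _ _ => Nat.zero_le _) (Finset.mem_univ j)) Nat.lt_two_pow_self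
  set h := hiP M f with hh
  have hhi : Integrable h (cubeMeasure d) := hiP_int M f hf hfi
  set K' := Function.update (MK B n) i0 (idK A) with hK'
  set S := Tm K' (disc A h) with hS
  have hmain : ex (fun y => |S y|) ≤ l * η / 16 := by
    set s : YA d A → ℝ := fun y => SignType.sign (S y) with hs
    have hsb : ∀ y (r : ℕ), s y ^ (2 * r) ≤ 1 := by
      intro y r
      rw [pow_mul]; apply pow_le_one₀ (sq_nonneg _)
      simp only [hs]
      rcases lt_trichotomy (S y) 0 with h | h | h
      · simp [h]
      · simp [h]
      · simp [h]
    have e1 : ex (fun y => |S y|) = ex (fun y => s y * S y) := by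
      congr 1; funext y; simp only [hs]; rw [sign_mul_self]
    rw [e1, hS, Tm_adj, ← int_disc h hhi]
    refine hM0 M hM A _ (fun r hr => ?_)
    have hr' : (1:ℝ) ≤ r := by exact_mod_cast hr
    set C : Fin d → ℝ := fun i => if i = i0 then 1 else if i ∈ B then 12 * r else 2 with hC
    have hCL : ∀ i, LqB A (K' i) r (C i) := by
      intro i
      by_cases hi : i = i0
      · subst hi; simp only [hK', hC, Function.update_self, if_true]; exact LqB_id A r
      · simp only [hK', hC, Function.update_of_ne hi, if_neg hi]
        unfold MK
        split_ifs
        · have := LqB_LK (hn i) (hnA i) r hr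
          push_cast at this
          convert this using 1; ring
        · exact LqB_RK (hn i) (hnA i) r hr
    refine (Tm_Lq K' C hCL s).trans ?_
    have hexs : ex (fun y => s y ^ (2 * r)) ≤ 1 := by
      have := ex_mono (fun y => hsb y r)
      rwa [ex_const] at this
    have hC0 : ∀ i, 0 ≤ C i := by intro i; simp only [hC]; split_ifs <;> positivity
    have hprod : ∏ i, C i ≤ D * (r:ℝ) ^ (B.card - 1) := by
      calc ∏ i, C i ≤ ∏ i, (2 * (if i ∈ B.erase i0 then 12 * (r:ℝ) else 1)) := by
            apply Finset.prod_le_prod (fun i _ => hC0 i)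
            intro i _
            simp only [hC, Finset.mem_erase]
            by_cases h1 : i = i0
            · simp [h1]
            · by_cases h2 : i ∈ B
              · simp [h1, h2]; linarith
              · simp [h1, h2]
        _ = D * (r:ℝ) ^ (B.card - 1) := by
            rw [Finset.prod_mul_distrib, Finset.prod_ite_mem, Finset.univ_inter, Finset.prod_const, Finset.prod_const,
              Finset.card_erase_of_mem hi0, hDdef, mul_pow]
            simp; ring
    have hp0 : 0 ≤ ∏ i, C i := Finset.prod_nonneg fun i _ => hC0 i
    calc _ ≤ (∏ i, C i) ^ (2 * r) * 1 := by gcongr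
      _ ≤ _ := by rw [mul_one]; gcongr
  have hw := opi_weak i0 (hn i0) (hnA i0) S l hl
  have e2 : ∀ x, mixedLogMean B h n x = opi i0 (LK (n i0)) S (dg A x) := by
    intro x
    rw [mixed_eq B h hhi n (fun i => (hnA i).le), Tm_split i0]
    congr 1
    unfold MK; rw [if_pos hi0]
  simp only [e2]
  rw [meas_dg (fun y => l ≤ |opi i0 (LK (n i0)) S y|)]
  calc _ ≤ 16 / l * ex (fun y => |S y|) := by convert hw
    _ ≤ 16 / l * (l * η / 16) := by gcongr
    _ = η := by field_simp

lemma disc_sq {d A : ℕ} (g : (Fin d → ℝ) → ℝ) (hg : Integrable g (cubeMeasure d)) (hg2 : Integrable (fun x => g x ^ 2) (cubeMeasure d)) :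
    ex (fun m : YA d A => disc A g m ^ 2) ≤ ∫ x, g x ^ 2 ∂(cubeMeasure d) := by
  have h1 := int_disc (A := A) g hg (disc A g)
  have h2 := int_dg (d := d) (fun m : YA d A => disc A g m ^ 2)
  have hi := G_dg_integrable (d := d) (fun m : YA d A => disc A g m ^ 2)
  have h3 : ∫ x, g x * disc A g (dg A x) ∂(cubeMeasure d) ≤
      ∫ x, ((1/2) * g x ^ 2 + (1/2) * (disc A g (dg A x)) ^ 2) ∂(cubeMeasure d) := by
    apply integral_mono
    · refine hg.mul_bdd (c := ∑ m, |disc A g m|) ((measurable_of_finite (disc A g)).comp (dg_meas A)).aestronglyMeasurable ?_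
      refine Eventually.of_forall fun x => ?_
      exact Finset.single_le_sum (f := fun m => |disc A g m|) (fun m _ => abs_nonneg _) (Finset.mem_univ (dg A x))
    · exact (hg2.const_mul _).add (hi.const_mul _)
    · intro x; nlinarith [sq_nonneg (g x - disc A g (dg A x))]
  rw [integral_add (hg2.const_mul _) (hi.const_mul _), integral_const_mul, integral_const_mul, h2, h1] at h3
  simp only [← pow_two] at h3
  linarith

lemma exA {d : ℕ} (n : Fin d → ℕ) (A0 : ℕ) : ∃ A, A0 ≤ A ∧ ∀ j, n j < 2 ^ A := by
  refine ⟨A0 + ∑ j, n j, by omega, fun j => ?_⟩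
  have h1 := Finset.single_le_sum (f := n) (fun _ _ => Nat.zero_le _) (Finset.mem_univ j)
  exact lt_of_le_of_lt (by omega) (Nat.lt_two_pow_self (n := A0 + ∑ j, n j))

lemma g_weak {d : ℕ} (B : Finset (Fin d)) (g : (Fin d → ℝ) → ℝ) (hg : Integrable g (cubeMeasure d))
    (hg2 : Integrable (fun x => g x ^ 2) (cubeMeasure d)) (n : Fin d → ℕ) (hn : ∀ j, 2 ≤ n j) (l : ℝ) (hl : 0 < l) :
    (cubeMeasure d).real {x | l ≤ |mixedLogMean B g n x|} ≤ (l ^ 2)⁻¹ * ((12 ^ d) ^ 2 * ∫ x, g x ^ 2 ∂(cubeMeasure d)) := by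
  obtain ⟨A, -, hnA⟩ := exA n 0
  have e : ∀ x, mixedLogMean B g n x = Tm (MK B n) (disc A g) (dg A x) := fun x =>
    mixed_eq B g hg n (fun i => (hnA i).le) x
  simp only [e]
  rw [meas_dg (fun y => l ≤ |Tm (MK B n) (disc A g) y|)]
  have hL : ∀ i, LqB A (MK B n i) 1 12 := by
    intro i; unfold MK
    split_ifs
    · have := LqB_LK (hn i) (hnA i) 1 le_rfl
      convert this using 1; norm_num
    · exact LqB_mono (LqB_RK (hn i) (hnA i) 1 le_rfl) (by norm_num) (by norm_num)
  have h1 := Tm_Lq (MK B n) (fun _ => 12) hL (disc A g)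
  simp only [Finset.prod_const, Finset.card_univ, Fintype.card_fin, mul_one] at h1
  have h2 := cheb_ex (fun y => (Tm (MK B n) (disc A g) y) ^ 2) (fun y => sq_nonneg _) (l ^ 2) (by positivity)
  calc _ ≤ ex (fun y => if l ^ 2 ≤ (Tm (MK B n) (disc A g) y) ^ 2 then (1:ℝ) else 0) := by
        apply ex_mono; intro y
        by_cases h : l ≤ |Tm (MK B n) (disc A g) y|
        · rw [if_pos h, if_pos]
          rw [← sq_abs (Tm _ _ _)]; gcongr
        · rw [if_neg h]; split_ifs <;> norm_num
    _ ≤ _ := h2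
    _ ≤ _ := by
        gcongr
        refine h1.trans ?_
        gcongr
        exact disc_sq g hg hg2


lemma Wp_flip {A a j : ℕ} (ha : a < A) (hj : j < 2 ^ A) (t : XA A) :
    Wp (sg (flipE a t)) j = (if j.testBit a then -1 else 1) * Wp (sg t) j := by
  have h : sg (flipE a t) = (fun k => if k = a then (-1:ℝ) else 1) * sg t := by
    funext k
    simp only [Pi.mul_apply]
    split_ifs with hk
    · subst hk; rw [sg_flip_eq ha]; ring
    · rw [sg_flip_ne hk]; ring
  rw [h, Wp_mul']
  congr 1
  rw [Wp_eq _ j A hj, Finset.prod_eq_single a]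
  · simp
  · intro b _ hb; simp [hb]
  · simp [ha]

lemma ortho {A i j : ℕ} (hi : i < 2 ^ A) (hj : j < 2 ^ A) :
    ex (fun t : XA A => Wp (sg t) i * Wp (sg t) j) = if i = j then 1 else 0 := by
  split_ifs with h
  · subst h
    simp only [Wp_sq (sg_isSgn _), ex_const]
  · obtain ⟨a, ha⟩ : ∃ a, i.testBit a ≠ j.testBit a := by
      by_contra hc; push Not at hc; exact h (Nat.eq_of_testBit_eq hc)
    have haA : a < A := by
      by_contra hc
      push Not at hc
      have h1 : (2:ℕ) ^ A ≤ 2 ^ a := Nat.pow_le_pow_right (by norm_num) hc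
      rw [Nat.testBit_lt_two_pow (by omega), Nat.testBit_lt_two_pow (by omega)] at ha
      exact ha rfl
    have h1 := ex_equiv (flipE (A := A) a) (fun t => Wp (sg t) i * Wp (sg t) j)
    have h2 : ∀ t : XA A, Wp (sg (flipE a t)) i * Wp (sg (flipE a t)) j = (-1) * (Wp (sg t) i * Wp (sg t) j) := by
      intro t
      rw [Wp_flip haA hi, Wp_flip haA hj]
      revert ha
      cases i.testBit a <;> cases j.testBit a <;> simp
    simp only [h2] at h1
    rw [ex_mul] at h1
    linarith

lemma op_Dk_W {A N j : ℕ} (hN : N ≤ 2 ^ A) (hj : j < 2 ^ A) (x : XA A) :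
    op (fun ρ => Dk ρ N) (fun t => Wp (sg t) j) x = (if j < N then 1 else 0) * Wp (sg x) j := by
  unfold op Dk
  simp only [Wp_mul', Finset.sum_mul]
  rw [ex_sum]
  have : ∀ i ∈ Finset.range N, ex (fun t : XA A => Wp (sg x) i * Wp (sg t) i * Wp (sg t) j) = if i = j then Wp (sg x) i else 0 := by
    intro i hi
    simp only [mul_assoc]
    rw [ex_mul, ortho (by have := Finset.mem_range.1 hi; omega) hj]
    split_ifs <;> simp
  rw [Finset.sum_congr rfl this]
  simp

lemma avg_eig {A n j : ℕ} (hn : 2 ≤ n) (hj : j < 2 ^ A) (k : ℕ → ℕ) (hk : ∀ i ∈ Finset.Ico 1 n, k i ≤ 2 ^ A)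
    (hcard : ((Finset.Ico 1 n).filter (fun i => ¬ j < k i)).card ≤ j) :
    ∃ lam : ℝ, 0 ≤ lam ∧ lam ≤ 1 ∧ 1 - lam ≤ j / logSum n ∧ ∀ x : XA A,
      op (fun ρ => ∑ i ∈ Finset.Ico 1 n, (1 / (logSum n * (i:ℝ))) * Dk ρ (k i)) (fun t => Wp (sg t) j) x = lam * Wp (sg x) j := by
  have hl := logSum_ge_one hn
  have hw := wts_sum hn
  refine ⟨∑ i ∈ Finset.Ico 1 n, (1 / (logSum n * (i:ℝ))) * (if j < k i then 1 else 0), ?_, ?_, ?_, ?_⟩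
  · apply Finset.sum_nonneg; intro i _; split_ifs <;> positivity
  · refine le_trans (Finset.sum_le_sum ?_) hw.le; intro i _
    have : 0 ≤ 1 / (logSum n * (i:ℝ)) := by positivity
    split_ifs
    · simp
    · simpa using this
  · have e : ∀ z : ℝ, 1 - z = (∑ i ∈ Finset.Ico 1 n, (1 / (logSum n * (i:ℝ)))) - z := by intro z; rw [hw]
    rw [e, ← Finset.sum_sub_distrib]
    calc _ ≤ ∑ i ∈ Finset.Ico 1 n, (if ¬ j < k i then 1 / logSum n else 0) := by
          apply Finset.sum_le_sum; intro i hi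
          have hi1 : (1:ℝ) ≤ i := by exact_mod_cast (Finset.mem_Ico.1 hi).1
          by_cases h : j < k i
          · simp [h]
          · simp only [h, if_false, mul_zero, sub_zero, not_false_eq_true, if_true]
            apply one_div_le_one_div_of_le (by linarith)
            nlinarith
      _ = ((Finset.Ico 1 n).filter (fun i => ¬ j < k i)).card * (1 / logSum n) := by
          rw [← Finset.sum_filter, Finset.sum_const, nsmul_eq_mul]
      _ ≤ j * (1 / logSum n) := by
          have : (((Finset.Ico 1 n).filter (fun i => ¬ j < k i)).card : ℝ) ≤ j := by exact_mod_cast hcard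
          gcongr
      _ = _ := by ring
  · intro x
    rw [op_sum, Finset.sum_mul]
    apply Finset.sum_congr rfl
    intro i hi
    rw [op_Dk_W (hk i hi) hj]; ring

lemma MK_eig {d A j : ℕ} (B : Finset (Fin d)) (n : Fin d → ℕ) (i : Fin d) (hn : 2 ≤ n i) (hA : n i < 2 ^ A) (hj : j < 2 ^ A) :
    ∃ lam : ℝ, 0 ≤ lam ∧ lam ≤ 1 ∧ 1 - lam ≤ j / logSum (n i) ∧ ∀ x : XA A,
      op (MK B n i) (fun t => Wp (sg t) j) x = lam * Wp (sg x) j := by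
  have e : MK B n i = fun ρ => ∑ k ∈ Finset.Ico 1 (n i), (1 / (logSum (n i) * (k:ℝ))) * Dk ρ (if i ∈ B then n i - k else k) := by
    funext ρ; exact MK_eq B n i ρ
  rw [e]
  refine avg_eig hn hj (fun k => if i ∈ B then n i - k else k) ?_ ?_
  · intro k hk; have := Finset.mem_Ico.1 hk; split_ifs <;> omega
  · by_cases hB : i ∈ B
    · simp only [hB, if_true]
      calc _ ≤ (Finset.Ico (n i - j) (n i)).card := by
            apply Finset.card_le_card; intro k hk
            simp at hk ⊢; omega
        _ ≤ j := by simp; omega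
    · simp only [hB, if_false]
      calc _ ≤ (Finset.Ioc 0 j).card := by
            apply Finset.card_le_card; intro k hk
            simp at hk ⊢; omega
        _ ≤ j := by simp

lemma Tm_prod {d A : ℕ} (K : Fin d → (ℕ → ℝ) → ℝ) (φ : Fin d → XA A → ℝ) (y : YA d A) :
    Tm K (fun t => ∏ i, φ i (t i)) y = ∏ i, op (K i) (φ i) (y i) := by
  unfold Tm op ex
  rw [Finset.prod_mul_distrib, Finset.prod_univ_sum]
  simp only [← Finset.prod_mul_distrib, Fintype.piFinset_univ]
  congr 1
  simp

lemma Tm_lin {d A : ℕ} {ι : Type*} (s : Finset ι) (c : ι → ℝ) (φ : ι → YA d A → ℝ) (K : Fin d → (ℕ → ℝ) → ℝ) (y : YA d A) :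
    Tm K (fun t => ∑ j ∈ s, c j * φ j t) y = ∑ j ∈ s, c j * Tm K (φ j) y := by
  unfold Tm
  simp only [← ex_mul]
  rw [← ex_sum]
  congr 1; funext t
  rw [Finset.mul_sum]; apply Finset.sum_congr rfl; intros; ring

lemma one_sub_prod {ι : Type*} (s : Finset ι) (a : ι → ℝ) (h0 : ∀ i, 0 ≤ a i) (h1 : ∀ i, a i ≤ 1) :
    1 - ∏ i ∈ s, a i ≤ ∑ i ∈ s, (1 - a i) ∧ ∏ i ∈ s, a i ≤ 1 := by
  classical
  have hp : ∀ s : Finset ι, ∏ i ∈ s, a i ≤ 1 := fun s => Finset.prod_le_one (fun i _ => h0 i) (fun i _ => h1 i)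
  refine ⟨?_, hp s⟩
  induction s using Finset.induction_on with
  | empty => simp
  | insert i s hi ih =>
    rw [Finset.prod_insert hi, Finset.sum_insert hi]
    nlinarith [hp s, h0 i, h1 i, Finset.prod_nonneg (s := s) (fun i _ => h0 i)]

lemma disc_dg {d A : ℕ} (Q : YA d A → ℝ) (m : YA d A) : disc A (fun x => Q (dg A x)) m = Q m := by
  unfold disc
  have : ∫ x in (dg A) ⁻¹' {m}, Q (dg A x) ∂(cubeMeasure d) = ∫ x in (dg A) ⁻¹' {m}, Q m ∂(cubeMeasure d) := by
    apply setIntegral_congr_fun (dg_meas A (measurableSet_singleton m))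
    intro x hx
    have : dg A x = m := hx
    simp only [this]
  rw [this, setIntegral_const, cell_vol]
  have : (0:ℝ) < (2 ^ A) ^ d := by positivity
  simp only [smul_eq_mul]; field_simp

lemma logSum_mono {m n : ℕ} (h : m ≤ n) : logSum m ≤ logSum n := by
  rcases m with _ | m
  · rcases n with _ | n
    · exact le_rfl
    · rw [logSum_Hs]; simpa [logSum] using Hs_nonneg n
  · obtain ⟨k, rfl⟩ : ∃ k, n = k + 1 := ⟨n - 1, by omega⟩
    rw [logSum_Hs, logSum_Hs]; exact Hs_mono (by omega)

lemma logSum_large (C : ℝ) : ∃ N, ∀ n, N ≤ n → C ≤ logSum n := by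
  obtain ⟨N, hN⟩ := eventually_atTop.1 (Real.tendsto_sum_range_one_div_nat_succ_atTop.eventually (eventually_ge_atTop C))
  refine ⟨N + 1, fun n hn => ?_⟩
  refine le_trans ?_ (logSum_mono hn)
  rw [logSum_Hs]
  exact hN N le_rfl

lemma poly_conv {d : ℕ} (B : Finset (Fin d)) (A0 : ℕ) (G : YA d A0 → ℝ) (η : ℝ) (hη : 0 < η) :
    ∃ N : ℕ, ∀ n : Fin d → ℕ, (∀ j, 2 ≤ n j) → (∀ j, N ≤ n j) → ∀ x,
      |mixedLogMean B (fun x => G (dg A0 x)) n x - G (dg A0 x)| ≤ η := by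
  set J := Fintype.piFinset (fun _ : Fin d => Finset.range (2 ^ A0)) with hJ
  set c : (Fin d → ℕ) → ℝ := fun j => ex (fun t : YA d A0 => (∏ i, Wp (sg (t i)) (j i)) * G t) with hc
  have hrep : ∀ y : YA d A0, G y = ∑ j ∈ J, c j * ∏ i, Wp (sg (y i)) (j i) := by
    intro y
    rw [← Tm_id G y]
    unfold Tm idK Dk
    simp only [Finset.prod_univ_sum, Finset.sum_mul]
    rw [ex_sum]
    apply Finset.sum_congr rfl; intro j _
    rw [hc]; beta_reduce
    rw [← ex_mul_right]
    congr 1; funext t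
    simp only [Wp_mul', Finset.prod_mul_distrib]; ring
  set S : ℝ := ∑ j ∈ J, |c j| with hS
  have hS0 : 0 ≤ S := Finset.sum_nonneg fun j _ => abs_nonneg _
  obtain ⟨N, hN⟩ := logSum_large ((S * (d * 2 ^ A0) + 1) / η)
  refine ⟨N, fun n hn hnN x => ?_⟩
  obtain ⟨A, hA0, hnA⟩ := exA n A0
  set Q : YA d A → ℝ := fun m => ∑ j ∈ J, c j * ∏ i, Wp (sg (m i)) (j i) with hQ
  have hjA : ∀ j ∈ J, ∀ i, j i < 2 ^ A0 := fun j hj i => Finset.mem_range.1 (Fintype.mem_piFinset.1 hj i)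
  have hpow : 2 ^ A0 ≤ 2 ^ A := Nat.pow_le_pow_right (by norm_num) hA0
  have hPQ : ∀ x : Fin d → ℝ, G (dg A0 x) = Q (dg A x) := by
    intro x
    rw [hrep]
    simp only [hQ]
    apply Finset.sum_congr rfl; intro j hj
    congr 1; apply Finset.prod_congr rfl; intro i _
    have h1 := hjA j hj i
    unfold dg
    rw [← walsh_eq h1, ← walsh_eq (by omega)]
  simp only [hPQ]
  rw [mixed_eq B _ (G_dg_integrable Q) n (fun i => (hnA i).le)]
  have hdd : disc A (fun x => Q (dg A x)) = Q := by funext m; exact disc_dg Q m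
  rw [hdd]
  generalize dg A x = y
  have hT : Tm (MK B n) Q y = ∑ j ∈ J, c j * Tm (MK B n) (fun t => ∏ i, Wp (sg (t i)) (j i)) y :=
    Tm_lin J c (fun j t => ∏ i, Wp (sg (t i)) (j i)) (MK B n) y
  have hQy : Q y = ∑ j ∈ J, c j * ∏ i, Wp (sg (y i)) (j i) := rfl
  rw [hT, hQy, ← Finset.sum_sub_distrib]
  have hterm : ∀ j ∈ J, |c j * Tm (MK B n) (fun t => ∏ i, Wp (sg (t i)) (j i)) y - c j * ∏ i, Wp (sg (y i)) (j i)|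
      ≤ |c j| * ((d * 2 ^ A0) / ((S * (d * 2 ^ A0) + 1) / η)) := by
    intro j hj
    rw [← mul_sub, abs_mul]
    apply mul_le_mul_of_nonneg_left _ (abs_nonneg _)
    have hex := fun i => MK_eig (A := A) (j := j i) B n i (hn i) (hnA i) (by have := hjA j hj i; omega)
    choose lam h0 h1 h2 h3 using hex
    rw [Tm_prod (MK B n) (fun i t => Wp (sg t) (j i))]
    simp only [h3]
    rw [Finset.prod_mul_distrib, ← sub_one_mul, abs_mul]
    have hW : |∏ i, Wp (sg (y i)) (j i)| = 1 := by
      rw [Finset.abs_prod]; apply Finset.prod_eq_one; intro i _; exact Wp_abs (sg_isSgn _) _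
    rw [hW, mul_one]
    obtain ⟨p1, p2⟩ := one_sub_prod Finset.univ lam h0 h1
    rw [abs_sub_comm, abs_of_nonneg (by linarith)]
    refine p1.trans ?_
    calc ∑ i, (1 - lam i) ≤ ∑ i : Fin d, 2 ^ A0 / ((S * (d * 2 ^ A0) + 1) / η) := by
          apply Finset.sum_le_sum; intro i _
          refine (h2 i).trans ?_
          have hji : (j i : ℝ) ≤ 2 ^ A0 := by exact_mod_cast (hjA j hj i).le
          have := hN (n i) (hnN i)
          gcongr
      _ = _ := by simp; ring
  refine (Finset.abs_sum_le_sum_abs _ _).trans ((Finset.sum_le_sum hterm).trans ?_)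
  rw [← Finset.sum_mul, ← hS]
  have : S * ((d * 2 ^ A0) / ((S * (d * 2 ^ A0) + 1) / η)) = (S * (d * 2 ^ A0) / (S * (d * 2 ^ A0) + 1)) * η := by
    field_simp
  rw [this]
  have h1 : S * (d * 2 ^ A0) / (S * (d * 2 ^ A0) + 1) ≤ 1 := by
    rw [div_le_one (by positivity)]; linarith
  nlinarith

lemma approx {d : ℕ} (g : (Fin d → ℝ) → ℝ) (hg : Integrable g (cubeMeasure d)) (M : ℝ) (hM : 0 ≤ M) (hgM : ∀ x, |g x| ≤ M)
    (η : ℝ) (hη : 0 < η) :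
    ∃ (A0 : ℕ) (G : YA d A0 → ℝ), (∀ m, |G m| ≤ M) ∧ ∫ x, |g x - G (dg A0 x)| ∂(cubeMeasure d) ≤ η := by
  have : (cubeMeasure d).Regular := by unfold cubeMeasure; infer_instance
  obtain ⟨c, hc1, hc2, hc3, hc4⟩ := hg.exists_hasCompactSupport_integral_sub_le (show 0 < η / 2 by linarith)
  have huc := hc1.uniformContinuous_of_continuous hc3
  obtain ⟨δ, hδ, hδ2⟩ := Metric.uniformContinuous_iff.1 huc (η / 2) (by linarith)
  obtain ⟨A0, hA0⟩ := exists_pow_lt_of_lt_one hδ (show (1/2:ℝ) < 1 by norm_num)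
  set cl : ℝ → ℝ := fun t => max (-M) (min M t) with hcl
  have hclM : ∀ t, |cl t| ≤ M := by
    intro t; rw [abs_le]; simp only [hcl]
    exact ⟨le_max_left _ _, max_le (by linarith) (min_le_left _ _)⟩
  have hcll : ∀ s t, |cl s - cl t| ≤ |s - t| := by
    intro s t; simp only [hcl]
    have h1 := abs_max_sub_max_le_max (-M) (min M s) (-M) (min M t)
    have h2 := abs_min_sub_min_le_max M s M t
    simp at h1 h2
    linarith
  have hclg : ∀ x, cl (g x) = g x := by
    intro x; have := abs_le.1 (hgM x); simp only [hcl]; rw [min_eq_right this.2, max_eq_right this.1]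
  classical
  set G : YA d A0 → ℝ := fun m => if h : ∃ x ∈ unitCube d, dg A0 x = m then cl (c h.choose) else 0 with hG
  have hGM : ∀ m, |G m| ≤ M := by
    intro m; simp only [hG]; split_ifs
    · exact hclM _
    · simpa using hM
  refine ⟨A0, G, hGM, ?_⟩
  have hpt : ∀ x ∈ unitCube d, |g x - G (dg A0 x)| ≤ ‖g x - c x‖ + η / 2 := by
    intro x hx
    have hex : ∃ x' ∈ unitCube d, dg A0 x' = dg A0 x := ⟨x, hx, rfl⟩
    obtain ⟨h1, h2⟩ := hex.choose_spec
    set x' := hex.choose with hx'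
    have hGx : G (dg A0 x) = cl (c x') := by simp only [hG]; rw [dif_pos hex]
    rw [hGx]
    have hd : dist x x' < δ := by
      rw [dist_pi_lt_iff hδ]
      intro i
      rw [Real.dist_eq]
      have := dig_dist (A := A0) (hx i trivial) (h1 i trivial) (congrFun h2 i).symm
      rw [one_div_pow] at hA0
      linarith
    have h3 := hδ2 hd
    rw [Real.dist_eq] at h3
    calc |g x - cl (c x')| = |(cl (g x) - cl (c x)) + (cl (c x) - cl (c x'))| := by rw [hclg]; congr 1; ring
      _ ≤ |cl (g x) - cl (c x)| + |cl (c x) - cl (c x')| := abs_add_le _ _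
      _ ≤ |g x - c x| + |c x - c x'| := add_le_add (hcll _ _) (hcll _ _)
      _ ≤ _ := by rw [Real.norm_eq_abs]; linarith
  have hae : ∀ᵐ x ∂(cubeMeasure d), |g x - G (dg A0 x)| ≤ ‖g x - c x‖ + η / 2 :=
    (ae_restrict_iff' (cube_meas d)).2 (Eventually.of_forall hpt)
  have hi : Integrable (fun x => ‖g x - c x‖) (cubeMeasure d) := (hg.sub hc4).norm
  calc _ ≤ ∫ x, (‖g x - c x‖ + η / 2) ∂(cubeMeasure d) :=
        integral_mono_ae (hg.sub (G_dg_integrable G)).abs (hi.add (integrable_const _)) hae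
    _ = (∫ x, ‖g x - c x‖ ∂(cubeMeasure d)) + η / 2 := by
        rw [integral_add hi (integrable_const _)]; simp
    _ ≤ η := by linarith

lemma disc_add {d A : ℕ} (f g : (Fin d → ℝ) → ℝ) (hf : Integrable f (cubeMeasure d)) (hg : Integrable g (cubeMeasure d)) (m : YA d A) :
    disc A (fun x => f x + g x) m = disc A f m + disc A g m := by
  unfold disc
  rw [integral_add hf.integrableOn hg.integrableOn]; ring

lemma mixed_add {d : ℕ} (B : Finset (Fin d)) (f g : (Fin d → ℝ) → ℝ) (hf : Integrable f (cubeMeasure d)) (hg : Integrable g (cubeMeasure d))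
    (n : Fin d → ℕ) (x : Fin d → ℝ) :
    mixedLogMean B (fun x => f x + g x) n x = mixedLogMean B f n x + mixedLogMean B g n x := by
  obtain ⟨A, -, hnA⟩ := exA n 0
  rw [mixed_eq B (fun x => f x + g x) (hf.add hg) n (fun i => (hnA i).le), mixed_eq B f hf n (fun i => (hnA i).le), mixed_eq B g hg n (fun i => (hnA i).le)]
  unfold Tm
  rw [← ex_add]
  congr 1; funext t
  rw [disc_add f g hf hg]; ring

/-- Theorem (measureconv). For `f ∈ L log^{|B|-1} L(I^d)`, the mixed
logarithmic means converge to `f` in measure on `I^d` as `min_j n_j → ∞`. -/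
theorem stmt5 (d : ℕ) (hd : 1 ≤ d) (B : Finset (Fin d)) (hB : B.Nonempty)
    (f : (Fin d → ℝ) → ℝ) (hf : Measurable f) (hfi : Integrable f (cubeMeasure d))
    (hfl : Integrable (fun x => |f x| * Real.log (1 + |f x|) ^ (B.card - 1)) (cubeMeasure d)) :
    ∀ ε > (0:ℝ), ∀ δ > (0:ℝ), ∃ N : ℕ, ∀ n : Fin d → ℕ, (∀ j, 2 ≤ n j) → (∀ j, N ≤ n j) →
      ((cubeMeasure d) {x | ε < |mixedLogMean B f n x - f x|}).toReal < δ := by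
  intro ε hε δ hδ
  set l := ε / 5 with hl
  have hl0 : 0 < l := by positivity
  obtain ⟨M0, hM0⟩ := h_weak B hB f hf hfi hfl (δ / 6) (by positivity) l hl0
  obtain ⟨M1, hM1⟩ := eventually_atTop.1 ((trunc_small f (fun x => |f x|) hf hfi.abs).eventually
    (gt_mem_nhds (show 0 < l * (δ / 6) by positivity)))
  set M : ℕ := max (max M0 M1) 1 with hM
  have hMh := hM0 M (le_trans (le_max_left _ _) (le_max_left _ _))
  have hMt := hM1 M (le_trans (le_max_right _ _) (le_max_left _ _))
  have hMpos : (1:ℝ) ≤ M := by exact_mod_cast le_max_right _ _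
  set h := hiP (M:ℝ) f with hh
  have hhi : Integrable h (cubeMeasure d) := hiP_int M f hf hfi
  set g : (Fin d → ℝ) → ℝ := fun x => f x - h x with hg
  have hgi : Integrable g (cubeMeasure d) := hfi.sub hhi
  have hgM : ∀ x, |g x| ≤ M := by
    intro x; simp only [hg, hh, hiP]
    split_ifs with hx
    · simp
    · push Not at hx; simpa using hx
  set C : ℝ := (l ^ 2)⁻¹ * ((12 ^ d) ^ 2 * (2 * M)) with hC
  have hC0 : 0 < C := by positivity
  set η := min (l * (δ / 6)) (δ / 6 / C) with hη
  have hη0 : 0 < η := by rw [hη]; apply lt_min <;> positivity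
  obtain ⟨A0, G, hG1, hG2⟩ := approx g hgi M (by positivity) hgM η hη0
  set g0 : (Fin d → ℝ) → ℝ := fun x => g x - G (dg A0 x) with hg0
  have hPi := G_dg_integrable (d := d) G
  have hg0i : Integrable g0 (cubeMeasure d) := hgi.sub hPi
  have hg0b : ∀ x, |g0 x| ≤ 2 * M := by
    intro x
    have h1 := hgM x
    have h2 := hG1 (dg A0 x)
    have h3 := abs_sub (g x) (G (dg A0 x))
    simp only [hg0]; linarith
  have hsq : ∀ x, g0 x ^ 2 ≤ 2 * M * |g0 x| := by
    intro x; rw [← sq_abs, pow_two]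
    exact mul_le_mul_of_nonneg_right (hg0b x) (abs_nonneg _)
  have hg02 : Integrable (fun x => g0 x ^ 2) (cubeMeasure d) := by
    refine Integrable.mono' (hg0i.abs.const_mul (2 * (M:ℝ))) (hg0i.aestronglyMeasurable.pow 2) ?_
    refine Eventually.of_forall fun x => ?_
    rw [Real.norm_eq_abs, abs_of_nonneg (sq_nonneg _)]; exact hsq x
  have hI2 : ∫ x, g0 x ^ 2 ∂(cubeMeasure d) ≤ 2 * M * η := by
    calc _ ≤ ∫ x, 2 * M * |g0 x| ∂(cubeMeasure d) := integral_mono hg02 (hg0i.abs.const_mul _) hsq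
      _ = 2 * M * ∫ x, |g0 x| ∂(cubeMeasure d) := integral_const_mul _ _
      _ ≤ _ := by gcongr
  obtain ⟨N, hN⟩ := poly_conv B A0 G l hl0
  refine ⟨N, fun n hn hnN => ?_⟩
  have hpoly := hN n hn hnN
  have hA := hMh n hn
  have hB2 : (cubeMeasure d).real {x | l ≤ |mixedLogMean B g0 n x|} ≤ δ / 6 := by
    refine (g_weak B g0 hg0i hg02 n hn l hl0).trans ?_
    calc _ ≤ (l ^ 2)⁻¹ * ((12 ^ d) ^ 2 * (2 * M * η)) := by gcongr
      _ = C * η := by rw [hC]; ring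
      _ ≤ C * (δ / 6 / C) := by gcongr; exact min_le_right _ _
      _ = δ / 6 := by field_simp
  have hC2 : (cubeMeasure d).real {x | l ≤ |h x|} ≤ δ / 6 := by
    have h1 := mul_meas_ge_le_integral_of_nonneg (μ := cubeMeasure d) (f := fun x => |h x|)
      (Eventually.of_forall fun x => abs_nonneg _) hhi.abs l
    have h2 : ∫ x, |h x| ∂(cubeMeasure d) = ∫ x, (if (M:ℝ) < |f x| then |f x| else 0) ∂(cubeMeasure d) := by
      congr 1; funext x; simp only [hh, hiP]; split_ifs <;> simp
    rw [h2] at h1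
    exact le_of_mul_le_mul_left (h1.trans hMt.le) hl0
  have hD2 : (cubeMeasure d).real {x | l ≤ |g0 x|} ≤ δ / 6 := by
    have h1 := mul_meas_ge_le_integral_of_nonneg (μ := cubeMeasure d) (f := fun x => |g0 x|)
      (Eventually.of_forall fun x => abs_nonneg _) hg0i.abs l
    exact le_of_mul_le_mul_left (h1.trans (hG2.trans (min_le_left _ _))) hl0
  have hdec : f = fun x => h x + (g0 x + G (dg A0 x)) := by
    funext x; simp only [hg0, hg]; ring
  have hTf : ∀ x, mixedLogMean B f n x = mixedLogMean B h n x + (mixedLogMean B g0 n x +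
      mixedLogMean B (fun x => G (dg A0 x)) n x) := by
    intro x
    rw [← mixed_add B g0 (fun x => G (dg A0 x)) hg0i hPi, ← mixed_add B h (fun x => g0 x + G (dg A0 x)) hhi (hg0i.add hPi), ← hdec]
  have hsub : {x | ε < |mixedLogMean B f n x - f x|} ⊆
      (({x | l ≤ |mixedLogMean B h n x|} ∪ {x | l ≤ |mixedLogMean B g0 n x|}) ∪ {x | l ≤ |h x|}) ∪ {x | l ≤ |g0 x|} := by
    intro x hx
    by_contra hc
    simp only [Set.mem_union, Set.mem_ofPred_eq, not_or, not_le] at hc hx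
    obtain ⟨⟨⟨c1, c2⟩, c3⟩, c4⟩ := hc
    have hp := hpoly x
    have hfx : f x = h x + (g0 x + G (dg A0 x)) := congrFun hdec x
    rw [hTf x, hfx] at hx
    rw [abs_lt] at c1 c2 c3 c4
    rw [abs_le] at hp
    have : |mixedLogMean B h n x + (mixedLogMean B g0 n x + mixedLogMean B (fun x => G (dg A0 x)) n x)
        - (h x + (g0 x + G (dg A0 x)))| ≤ ε := by
      rw [abs_le]; constructor <;> linarith [c1.1, c1.2, c2.1, c2.2, c3.1, c3.2, c4.1, c4.2, hp.1, hp.2]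
    linarith
  have h1 := measureReal_mono (μ := cubeMeasure d) hsub
  have h2 := measureReal_union_le (μ := cubeMeasure d)
    (({x | l ≤ |mixedLogMean B h n x|} ∪ {x | l ≤ |mixedLogMean B g0 n x|}) ∪ {x | l ≤ |h x|}) {x | l ≤ |g0 x|}
  have h3 := measureReal_union_le (μ := cubeMeasure d)
    ({x | l ≤ |mixedLogMean B h n x|} ∪ {x | l ≤ |mixedLogMean B g0 n x|}) {x | l ≤ |h x|}
  have h4 := measureReal_union_le (μ := cubeMeasure d) {x | l ≤ |mixedLogMean B h n x|} {x | l ≤ |mixedLogMean B g0 n x|}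
  change (cubeMeasure d).real {x | ε < |mixedLogMean B f n x - f x|} < δ
  linarith

end
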